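/- For every n ≥ 1 and every noncrossing partition π ∈ NC(n): Σ_{t ∈ ST(n), π(t) = π} ω(sk(t)) = Σ_{σ ∈ NC_irr(n), π ⊑ σ} (−1)^{|π|−|σ|} ω(t(σ)), where π ⊑ σ means that every block of π is contained in a block of σ and the restriction of π to each block of σ is an interval partition of that block. -/

import Mathlib

open scoped BigOperators

/-- Planar rooted trees (rose trees). -/
inductive PTree : Type
  | node : List PTree → PTree

namespace PTree

/-- The single-vertex tree (a leaf). -/
abbrev leaf : PTree := .node []

/-- Subtree at a given path from the root (entries select children). -/
def subtreeAt : List ℕ → PTree → Option PTree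
  | [], t => some t
  | i :: p, node cs => (cs[i]?).bind (subtreeAt p)

/-- `p` is (the path of) a vertex of `t`. -/
def IsVertex (t : PTree) (p : List ℕ) : Prop := (subtreeAt p t).isSome

/-- `p` is a leaf of `t`. -/
def IsLeafAt (t : PTree) (p : List ℕ) : Prop := subtreeAt p t = some leaf

/-- `p` is an internal (non-leaf) vertex of `t`. -/
def IsInternalAt (t : PTree) (p : List ℕ) : Prop :=
  ∃ cs, subtreeAt p t = some (node cs) ∧ cs ≠ []

/-- Schröder trees: every internal vertex has at least two children. -/
inductive IsSchroder : PTree → Prop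
  | leaf : IsSchroder (node [])
  | node (cs : List PTree) : 2 ≤ cs.length → (∀ c ∈ cs, IsSchroder c) → IsSchroder (node cs)

/-- Number of leaves of a tree. -/
noncomputable def numLeaves (t : PTree) : ℕ := Nat.card {p : List ℕ // IsLeafAt t p}

/-- Number of sectors between consecutive leaves. -/
noncomputable def numSectors (t : PTree) : ℕ := numLeaves t - 1

/-- Number of internal vertices. -/
noncomputable def numInternal (t : PTree) : ℕ := Nat.card {p : List ℕ // IsInternalAt t p}

/-- The set of Schröder trees with `n+1` leaves. -/
def ST (n : ℕ) : Set PTree := {t | IsSchroder t ∧ numLeaves t = n + 1}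

/-- Number of surjective strictly order-preserving maps from the poset of internal
vertices of `t` (i.e. the vertex poset of the skeleton `sk(t)`, with the root minimal,
the order being the ancestor/prefix order) onto `{1, …, k}`. This is `ω_k(sk(t))`. -/
noncomputable def omegaSkK (t : PTree) (k : ℕ) : ℕ :=
  Nat.card {f : {p : List ℕ // IsInternalAt t p} → Fin k //
    Function.Surjective f ∧ ∀ v w, v.1 <+: w.1 → v ≠ w → f v < f w}

/-- The Murua coefficient `ω(sk(t))` of the skeleton of `t`. -/
noncomputable def omegaSk (t : PTree) : ℂ :=
  ∑ k ∈ Finset.Icc 1 (numInternal t), ((-1 : ℂ) ^ (k + 1) / (k : ℂ)) * (omegaSkK t k : ℂ)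

/-- The subtree of `t` at path `p` (junk value: a leaf). -/
noncomputable def subtree! (t : PTree) (p : List ℕ) : PTree := (subtreeAt p t).getD leaf

/-- Number of leaves of `t` strictly to the left of the subtree at `p`. -/
noncomputable def leavesBefore (t : PTree) (p : List ℕ) : ℕ :=
  Nat.card {q : List ℕ // IsLeafAt t q ∧ List.Lex (· < ·) q p ∧ ¬ p <+: q}

/-- Sector number `i` (0-indexed: the sector between the `(i+1)`-st and `(i+2)`-nd leaves of `t`)
lies strictly inside the subtree of `t` rooted at `p`. -/
def SectorIn (t : PTree) (p : List ℕ) (i : ℕ) : Prop :=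
  leavesBefore t p ≤ i ∧ i + 2 ≤ leavesBefore t p + numLeaves (subtree! t p)

/-- The internal vertex `v` of `t` owns sector `i`: the sector lies in the corolla at `v`,
i.e. inside the subtree at `v` but not inside the subtree at any strictly deeper vertex. -/
def OwnsSector (t : PTree) (v : List ℕ) (i : ℕ) : Prop :=
  IsInternalAt t v ∧ SectorIn t v i ∧
    ∀ w, IsInternalAt t w → v <+: w → w ≠ v → ¬ SectorIn t w i

/-- Sectors `i` and `j` belong to the same block of the noncrossing partition `π(t)`. -/
def SameOwner (t : PTree) (i j : ℕ) : Prop := ∃ v, OwnsSector t v i ∧ OwnsSector t v j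

open Classical in
/-- `φ_{π(t)}(a_1,…,a_n)`: the product over the blocks of the noncrossing partition `π(t)`
(one block per internal vertex `v`, consisting of the sectors owned by `v`) of `φ` applied to
the ordered product of the corresponding letters of `w`. -/
noncomputable def phiPi {A : Type*} [Ring A] (φ : A → ℂ) (t : PTree) (w : List A) : ℂ :=
  ∏ᶠ v ∈ {v : List ℕ | IsInternalAt t v},
    φ ((((List.range w.length).filter fun i => OwnsSector t v i).map fun i => w.getD i 0).prod)

/-- A corolla: a root whose (at least two) children are all leaves. -/
def corolla (m : ℕ) : PTree := node (List.replicate m leaf)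

/-- `t` is a corolla. -/
def IsCorolla (t : PTree) : Prop := ∃ m, 2 ≤ m ∧ t = corolla m

/-- Graft a tree `s` onto the leftmost leaf of `t`. -/
def graftLeftmost : PTree → PTree → PTree
  | node [], s => s
  | node (c :: cs), s => node (graftLeftmost c s :: cs)

/-- Trees obtained from the single-vertex tree by repeatedly grafting a corolla
onto the leftmost leaf. -/
inductive IsBST : PTree → Prop
  | single : IsBST leaf
  | graft (t : PTree) (m : ℕ) : IsBST t → 2 ≤ m → IsBST (graftLeftmost t (corolla m))

/-- Schröder trees whose leftmost child of the root is a leaf. -/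
def IsPST (t : PTree) : Prop := ∃ cs, t = node (leaf :: cs)

end PTree
section Partitions

open scoped BigOperators

/-- Set partitions of `[n] = {1,…,n}`, modeled as finpartitions of `Fin n`. -/
abbrev NPart (n : ℕ) := Finpartition (Finset.univ : Finset (Fin n))

/-- Noncrossing partitions: there are no `a < b < c < d` with `a, c` in one block and
`b, d` in a different block. -/
def IsNoncrossing {n : ℕ} (π : NPart n) : Prop :=
  ∀ a b c d : Fin n, a < b → b < c → c < d →
    ∀ V ∈ π.parts, ∀ W ∈ π.parts, a ∈ V → c ∈ V → b ∈ W → d ∈ W → V = W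

/-- Interval partitions: every block is an interval of consecutive elements. -/
def IsIntervalPart {n : ℕ} (π : NPart n) : Prop :=
  ∀ V ∈ π.parts, ∀ x ∈ V, ∀ y ∈ V, ∀ z : Fin n, x ≤ z → z ≤ y → z ∈ V

/-- Irreducible noncrossing partitions: `1` and `n` lie in the same block. -/
def IsIrreducibleNC {n : ℕ} (π : NPart n) : Prop :=
  ∃ V ∈ π.parts, (∀ i : Fin n, i.val = 0 → i ∈ V) ∧ (∀ i : Fin n, i.val = n - 1 → i ∈ V)

/-- `W` is nested in `V`: every element of `W` lies in the interval `[min V, max V]`. -/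
def NestedIn {n : ℕ} (W V : Finset (Fin n)) : Prop :=
  ∀ w ∈ W, (∃ a ∈ V, a ≤ w) ∧ (∃ b ∈ V, w ≤ b)

open Classical in
/-- The forest factorial `t(π)!` of the forest of nestings of `π`: the product, over all
blocks `V`, of the number of blocks nested in `V` (the size of the subtree rooted at `V`). -/
noncomputable def forestFactorial {n : ℕ} (π : NPart n) : ℕ :=
  ∏ V ∈ π.parts, (π.parts.filter fun W => NestedIn W V).card

/-- `f_π(a_1,…,a_n)`: the product over the blocks `V = {i_1 < … < i_s}` of `π` of
`f(a_{i_1},…,a_{i_s})`, for a family of multilinear functionals encoded as `f : List A → ℂ`. -/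
noncomputable def blockApply {A : Type*} {n : ℕ} (f : List A → ℂ) (a : Fin n → A)
    (π : NPart n) : ℂ :=
  ∏ V ∈ π.parts, f ((V.sort (· ≤ ·)).map a)

/-- `φ_π(a_1,…,a_n)` for the moment functionals `φ_m(a_1,…,a_m) = φ(a_1 ⋯ a_m)`. -/
noncomputable def momApply {A : Type*} [Ring A] {n : ℕ} (φ : A → ℂ) (a : Fin n → A)
    (π : NPart n) : ℂ :=
  blockApply (fun l => φ l.prod) a π

/-- `ω_k(t(π))` for the nesting poset of the blocks of `π` (for irreducible `π`, this is
the vertex poset of the tree of nestings, rooted at the outermost block): the number of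
surjective strictly order-preserving maps onto `{1,…,k}`. -/
noncomputable def omegaNestK {n : ℕ} (π : NPart n) (k : ℕ) : ℕ :=
  Nat.card {f : {V // V ∈ π.parts} → Fin k // Function.Surjective f ∧
    ∀ V W : {V // V ∈ π.parts}, NestedIn W.1 V.1 → V ≠ W → f V < f W}

/-- The Murua coefficient `ω(t(π))` of the tree (forest) of nestings of `π`. -/
noncomputable def omegaNest {n : ℕ} (π : NPart n) : ℂ :=
  ∑ k ∈ Finset.Icc 1 π.parts.card, ((-1 : ℂ) ^ (k + 1) / (k : ℂ)) * (omegaNestK π k : ℂ)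

/-- The noncrossing partition `π(t)` associated to a Schröder tree `t ∈ ST(n)` equals `π`:
two sectors lie in the same block of `π(t)` (i.e. have the same owning internal vertex)
iff they lie in the same block of `π`. -/
def TreePartEq {n : ℕ} (t : PTree) (π : NPart n) : Prop :=
  ∀ i j : Fin n, PTree.SameOwner t i.val j.val ↔ ∃ V ∈ π.parts, i ∈ V ∧ j ∈ V

/-- The moment–cumulant relation defining the monotone cumulants `h`. -/
def MonotoneMC {A : Type*} [Ring A] (φ : A → ℂ) (h : List A → ℂ) : Prop :=
  ∀ (m : ℕ), 1 ≤ m → ∀ a : Fin m → A,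
    φ (List.ofFn a).prod =
      ∑ᶠ π ∈ {π : NPart m | IsNoncrossing π}, (forestFactorial π : ℂ)⁻¹ * blockApply h a π

/-- The moment–cumulant relation defining the free cumulants `r`. -/
def FreeMC {A : Type*} [Ring A] (φ : A → ℂ) (r : List A → ℂ) : Prop :=
  ∀ (m : ℕ), 1 ≤ m → ∀ a : Fin m → A,
    φ (List.ofFn a).prod = ∑ᶠ π ∈ {π : NPart m | IsNoncrossing π}, blockApply r a π

/-- The moment–cumulant relation defining the Boolean cumulants `b`. -/
def BooleanMC {A : Type*} [Ring A] (φ : A → ℂ) (b : List A → ℂ) : Prop :=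
  ∀ (m : ℕ), 1 ≤ m → ∀ a : Fin m → A,
    φ (List.ofFn a).prod = ∑ᶠ π ∈ {π : NPart m | IsIntervalPart π}, blockApply b a π

end Partitions

/-- The relation `π ⊑ σ`: every block of `π` is contained in a block of `σ`, and the
restriction of `π` to each block of `σ` is an interval partition of that block. -/
def SqSubseteq {n : ℕ} (π σ : NPart n) : Prop :=
  (∀ V ∈ π.parts, ∃ W ∈ σ.parts, V ⊆ W) ∧
  (∀ W ∈ σ.parts, ∀ V ∈ π.parts, V ⊆ W →
    ∀ x ∈ V, ∀ y ∈ V, ∀ z ∈ W, x ≤ z → z ≤ y → z ∈ V)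

/-! Call two positions of a word `w : [n] → [k]` level if they carry the same letter and no smaller
letter occurs between them; the level classes form a noncrossing partition. Both sides of the
identity equal `Σ_k (-1)^(k+1)/k · #{surjective w : [n] → [k] with level partition π}`.

On the left, cutting a word at the occurrences of its smallest letter, and recursively the pieces,
shows that a word is the same thing as a Schröder tree with a strictly increasing labelling of its
internal vertices, the `i`-th letter being the label of the owner of the `i`-th sector. Two sectors
then have the same owner exactly if they are level.

On the right, strictly increasing labellings of the nesting forest of a noncrossing `σ` are the
words whose level partition `ρ` satisfies `σ ⊑ ρ`. For fixed `ρ` the partitions `σ` with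
`π ⊑ σ ⊑ ρ` form a Boolean lattice, so their alternating sum is `1` if `π = ρ` and `0` otherwise.
Reducible `σ` contribute nothing: the Murua coefficient is the linear coefficient of the strict
order polynomial, which for a disconnected poset is a product of polynomials without constant term.
-/

section StrictMaps

open Polynomial

lemma card_surjective_eq_card_comp {α β γ : Type*} {q : α → β} (hq : Function.Surjective q)
    (Q : (β → γ) → Prop) :
    Nat.card {f : β → γ // Function.Surjective f ∧ Q f} =
      Nat.card {w : α → γ // Function.Surjective w ∧ ∃ f, Q f ∧ f ∘ q = w} := by
  refine Nat.card_congr (Equiv.ofBijective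
    (fun f => ⟨f.1 ∘ q, f.2.1.comp hq, f.1, f.2.2, rfl⟩) ⟨fun f g h => ?_, ?_⟩)
  · exact Subtype.ext (hq.injective_comp_right (congrArg Subtype.val h))
  · rintro ⟨_, hw, f, hf, rfl⟩
    exact ⟨⟨f, hw.of_comp, hf⟩, rfl⟩

variable {P : Type*} (r : P → P → Prop)

/-- `ω_k` of the poset with strict order `r`: the number of surjections `P → {1, …, k}` that are
strictly increasing along `r`. -/
noncomputable def strictSurjCount (k : ℕ) : ℕ :=
  Nat.card {f : P → Fin k // Function.Surjective f ∧ ∀ v w, r v w → f v < f w}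

/-- The Murua coefficient of the poset with strict order `r`. -/
noncomputable def muruaCoeff : ℚ :=
  ∑ k ∈ Finset.Icc 1 (Nat.card P), (-1) ^ (k + 1) / k * strictSurjCount r k

lemma strictSurjCount_eq_zero [Finite P] {k : ℕ} (hk : Nat.card P < k) :
    strictSurjCount r k = 0 := by
  have : IsEmpty {f : P → Fin k // Function.Surjective f ∧ ∀ v w, r v w → f v < f w} :=
    ⟨fun f => hk.not_ge (by simpa using Nat.card_le_card_of_surjective f.1 f.2.1)⟩
  exact Nat.card_of_isEmpty

lemma cast_muruaCoeff_eq_sum_Icc [Finite P] {N : ℕ} (hN : Nat.card P ≤ N) :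
    (muruaCoeff r : ℂ) = ∑ k ∈ Finset.Icc 1 N, (-1) ^ (k + 1) / k * (strictSurjCount r k : ℂ) := by
  rw [muruaCoeff]
  push_cast
  refine Finset.sum_subset (Finset.Icc_subset_Icc_right hN) fun k hk hk' => ?_
  have : Nat.card P < k := by grind
  rw [strictSurjCount_eq_zero r this, Nat.cast_zero, mul_zero]

lemma card_strict_range_eq {N : ℕ} (S : Finset (Fin N)) :
    Nat.card {f : P → Fin N // (∀ v w, r v w → f v < f w) ∧ Set.range f = S} =
      strictSurjCount r S.card := by
  let e := S.orderEmbOfFin rfl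
  have he : Set.range e = S := S.range_orderEmbOfFin rfl
  have range_comp (g : P → Fin S.card) (hg : Function.Surjective g) : Set.range (e ∘ g) = S := by
    rw [hg.range_comp, he]
  refine (Nat.card_congr (Equiv.ofBijective (fun g => ⟨e ∘ g.1,
    fun v w h => e.strictMono (g.2.2 v w h), range_comp _ g.2.1⟩) ⟨fun g g' h => ?_, ?_⟩)).symm
  · exact Subtype.ext (e.injective.comp_left (congrArg Subtype.val h))
  · rintro ⟨f, hf, hS⟩
    obtain ⟨g, rfl⟩ := Set.range_subset_range_iff_exists_comp.1 (hS.trans he.symm).subset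
    have hg : Function.Surjective g := fun k => by
      obtain ⟨v, hv⟩ : e k ∈ Set.range (e ∘ g) := hS ▸ he ▸ Set.mem_range_self k
      exact ⟨v, e.injective hv⟩
    exact ⟨⟨g, hg, fun v w h => e.lt_iff_lt.1 (hf v w h)⟩, rfl⟩

lemma card_strict_eq_sum_choose [Finite P] (N : ℕ) :
    Nat.card {f : P → Fin N // ∀ v w, r v w → f v < f w} =
      ∑ k ∈ Finset.range (N + 1), N.choose k * strictSurjCount r k := by
  classical
  have := Fintype.ofFinite P
  have fiber_card (S : Finset (Fin N)) :
      Nat.card {f : {f : P → Fin N // ∀ v w, r v w → f v < f w} // Finset.univ.image f.1 = S} =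
        strictSurjCount r S.card := by
    rw [← card_strict_range_eq, Nat.card_congr (Equiv.subtypeSubtypeEquivSubtypeInter _
      fun f : P → Fin N => Finset.univ.image f = S)]
    simp only [← Finset.coe_inj, Finset.coe_image, Finset.coe_univ, Set.image_univ]
  rw [Nat.card_congr (Equiv.sigmaFiberEquiv fun f => Finset.univ.image f.1).symm, Nat.card_sigma]
  simp_rw [fiber_card]
  rw [← Finset.powerset_univ, Finset.sum_powerset_apply_card, Finset.card_univ, Fintype.card_fin]
  simp_rw [smul_eq_mul]

/-- The strict order polynomial of the poset with strict order `r`, expanded in the falling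
factorials `X (X - 1) ⋯ (X - k + 1)`. -/
noncomputable def strictOrderPoly : ℚ[X] :=
  ∑ k ∈ Finset.range (Nat.card P + 1), C (strictSurjCount r k / k.factorial : ℚ) *
    descPochhammer ℚ k

lemma eval_strictOrderPoly [Finite P] (N : ℕ) :
    (strictOrderPoly r).eval (N : ℚ) = Nat.card {f : P → Fin N // ∀ v w, r v w → f v < f w} := by
  have term (k : ℕ) : (C (strictSurjCount r k / k.factorial : ℚ) * descPochhammer ℚ k).eval (N : ℚ)
      = N.choose k * strictSurjCount r k := by
    rw [eval_C_mul, descPochhammer_eval_eq_descFactorial, Nat.descFactorial_eq_factorial_mul_choose]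
    push_cast
    field_simp
  rw [card_strict_eq_sum_choose, strictOrderPoly, eval_finsetSum]
  push_cast
  simp_rw [term]
  refine Finset.sum_congr_of_eq_on_inter (fun k _ hk => ?_) (fun k _ hk => ?_) fun _ _ _ => rfl
  · rw [Nat.choose_eq_zero_of_lt (by simpa using hk), Nat.cast_zero, zero_mul]
  · rw [strictSurjCount_eq_zero r (by simpa using hk), Nat.cast_zero, mul_zero]

lemma coeff_one_descPochhammer_succ (k : ℕ) :
    (descPochhammer ℚ (k + 1)).coeff 1 = (-1) ^ k * k.factorial := by
  rw [descPochhammer_succ_left, coeff_X_mul, coeff_zero_eq_eval_zero, eval_comp, eval_sub, eval_X,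
    eval_one, zero_sub]
  have := ascPochhammer_eval_neg_eq_descPochhammer (R := ℚ) (-1) k
  rw [neg_neg, ascPochhammer_eval_one] at this
  rw [this, ← mul_assoc, ← mul_pow]
  norm_num

lemma coeff_one_strictOrderPoly : (strictOrderPoly r).coeff 1 = muruaCoeff r := by
  have coeff_zero_term : (descPochhammer ℚ 0).coeff 1 = 0 := by
    rw [descPochhammer_zero, coeff_one, if_neg one_ne_zero]
  rw [strictOrderPoly, finsetSum_coeff, Finset.sum_range_succ', coeff_C_mul, coeff_zero_term,
    mul_zero, add_zero, muruaCoeff, ← Finset.Ico_add_one_right_eq_Icc, Finset.sum_Ico_eq_sum_range,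
    Nat.add_sub_cancel]
  refine Finset.sum_congr rfl fun k _ => ?_
  rw [coeff_C_mul, coeff_one_descPochhammer_succ, add_comm 1 k, Nat.factorial_succ, pow_add _ k 2]
  push_cast
  field_simp

lemma coeff_zero_strictOrderPoly [Finite P] [Nonempty P] : (strictOrderPoly r).coeff 0 = 0 := by
  have : IsEmpty (P → Fin 0) := inferInstance
  simpa [coeff_zero_eq_eval_zero] using eval_strictOrderPoly r 0

/-- On a disconnected poset the strict order polynomial is a product of two polynomials without
constant term, and the Murua coefficient is its linear coefficient. -/
lemma muruaCoeff_eq_zero_of_disconnected [Finite P] {S : P → Prop} (hr : ∀ v w, r v w → (S v ↔ S w))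
    (hS : ∃ v, S v) (hS' : ∃ v, ¬ S v) : muruaCoeff r = 0 := by
  classical
  let r₁ (v w : {v // S v}) : Prop := r v w
  let r₂ (v w : {v // ¬ S v}) : Prop := r v w
  have : Nonempty {v // S v} := nonempty_subtype.2 hS
  have : Nonempty {v // ¬ S v} := nonempty_subtype.2 hS'
  have strict_iff {N : ℕ} (f : P → Fin N) : (∀ v w, r v w → f v < f w) ↔
      (∀ v w, r₁ v w → f v < f w) ∧ ∀ v w, r₂ v w → f v < f w := by
    refine ⟨fun h => ⟨fun v w => h v w, fun v w => h v w⟩, fun h v w hvw => ?_⟩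
    by_cases hv : S v
    · exact h.1 ⟨v, hv⟩ ⟨w, (hr v w hvw).1 hv⟩ hvw
    · exact h.2 ⟨v, hv⟩ ⟨w, mt (hr v w hvw).2 hv⟩ hvw
  have factor : strictOrderPoly r = strictOrderPoly r₁ * strictOrderPoly r₂ := by
    refine eq_of_infinite_eval_eq _ _ (Set.Infinite.mono (s := Set.range ((↑) : ℕ → ℚ)) ?_
      (Set.infinite_range_of_injective Nat.cast_injective))
    rintro _ ⟨N, rfl⟩
    have e := ((Equiv.piEquivPiSubtypeProd S fun _ => Fin N).subtypeEquiv
      (q := fun f => (∀ v w, r₁ v w → f.1 v < f.1 w) ∧ ∀ v w, r₂ v w → f.2 v < f.2 w)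
      strict_iff).trans (Equiv.subtypeProdEquivProd
      (p := fun f : _ → Fin N => ∀ v w, r₁ v w → f v < f w)
      (q := fun f : _ → Fin N => ∀ v w, r₂ v w → f v < f w))
    rw [Set.mem_ofPred_eq, eval_mul, eval_strictOrderPoly, eval_strictOrderPoly,
      eval_strictOrderPoly, Nat.card_congr e, Nat.card_prod, Nat.cast_mul]
  rw [← coeff_one_strictOrderPoly, factor, mul_coeff_one, coeff_zero_strictOrderPoly,
    coeff_zero_strictOrderPoly, zero_mul, mul_zero, add_zero]

end StrictMaps

section Partitions

variable {n : ℕ}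

lemma mem_part_iff_part_eq {π : NPart n} {i j : Fin n} : i ∈ π.part j ↔ π.part i = π.part j :=
  π.mem_part_iff_part_eq_part (Finset.mem_univ i) (Finset.mem_univ j)

lemma part_eq_part_iff_exists {π : NPart n} {i j : Fin n} :
    π.part i = π.part j ↔ ∃ V ∈ π.parts, i ∈ V ∧ j ∈ V := by
  rw [← mem_part_iff_part_eq, Finpartition.mem_part_iff_exists]

lemma part_ofSetoid_eq_iff {ι : Type*} [Fintype ι] [DecidableEq ι] (s : Setoid ι)
    [DecidableRel s.r] {i j : ι} :
    (Finpartition.ofSetoid s).part i = (Finpartition.ofSetoid s).part j ↔ s i j := by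
  rw [← Finpartition.mem_part_ofSetoid_iff_rel, eq_comm,
    Finpartition.mem_part_iff_part_eq_part _ (Finset.mem_univ _) (Finset.mem_univ _)]

lemma le_iff_part_eq_part {π σ : NPart n} :
    π ≤ σ ↔ ∀ i j, π.part i = π.part j → σ.part i = σ.part j := by
  refine ⟨fun h i j hij => ?_, fun h V hV => ?_⟩
  · obtain ⟨V, hV, hi, hj⟩ := part_eq_part_iff_exists.1 hij
    obtain ⟨W, hW, hVW⟩ := h hV
    exact part_eq_part_iff_exists.2 ⟨W, hW, hVW hi, hVW hj⟩
  · obtain ⟨i, hi⟩ := π.nonempty_of_mem_parts hV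
    refine ⟨σ.part i, σ.part_mem.2 (Finset.mem_univ i), fun j hj => ?_⟩
    exact mem_part_iff_part_eq.2 (h j i (part_eq_part_iff_exists.2 ⟨V, hV, hj, hi⟩))

lemma isNoncrossing_iff_part_eq_part {π : NPart n} : IsNoncrossing π ↔
    ∀ a b c d, a < b → b < c → c < d → π.part a = π.part c → π.part b = π.part d →
      π.part a = π.part b := by
  refine ⟨fun h a b c d hab hbc hcd hac hbd => ?_,
    fun h a b c d hab hbc hcd V hV W hW haV hcV hbW hdW => ?_⟩
  · obtain ⟨V, hV, haV, hcV⟩ := part_eq_part_iff_exists.1 hac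
    obtain ⟨W, hW, hbW, hdW⟩ := part_eq_part_iff_exists.1 hbd
    rw [π.part_eq_of_mem hV haV, π.part_eq_of_mem hW hbW]
    exact h a b c d hab hbc hcd V hV W hW haV hcV hbW hdW
  · rw [← π.part_eq_of_mem hV haV, ← π.part_eq_of_mem hW hbW]
    exact h a b c d hab hbc hcd (part_eq_part_iff_exists.2 ⟨V, hV, haV, hcV⟩)
      (part_eq_part_iff_exists.2 ⟨W, hW, hbW, hdW⟩)

lemma sqSubseteq_iff_part_eq_part {π σ : NPart n} : SqSubseteq π σ ↔
    π ≤ σ ∧ ∀ x y z, x ≤ z → z ≤ y → π.part x = π.part y → σ.part x = σ.part z →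
      π.part x = π.part z := by
  refine ⟨fun h => ⟨h.1, fun x y z hxz hzy hxy hxz' => ?_⟩,
    fun h => ⟨h.1, fun W hW V hV hVW x hx y hy z hz hxz hzy => ?_⟩⟩
  · obtain ⟨V, hV, hx, hy⟩ := part_eq_part_iff_exists.1 hxy
    obtain ⟨W, hW, hxW, hzW⟩ := part_eq_part_iff_exists.1 hxz'
    obtain ⟨W', hW', hVW'⟩ := h.1 V hV
    obtain rfl : W' = W := σ.eq_of_mem_parts hW' hW (hVW' hx) hxW
    exact part_eq_part_iff_exists.2 ⟨V, hV, hx, h.2 W' hW V hV hVW' x hx y hy z hzW hxz hzy⟩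
  · have := h.2 x y z hxz hzy (part_eq_part_iff_exists.2 ⟨V, hV, hx, hy⟩)
      (part_eq_part_iff_exists.2 ⟨W, hW, hVW hx, hz⟩)
    exact (π.part_eq_iff_mem hV).1 (this ▸ π.part_eq_of_mem hV hx)

namespace SqSubseteq

variable {π σ ρ : NPart n}

lemma le (h : SqSubseteq π σ) : π ≤ σ := h.1

lemma part_eq_part (h : SqSubseteq π σ) {x y z : Fin n} (hxz : x ≤ z) (hzy : z ≤ y)
    (hxy : π.part x = π.part y) (hσ : σ.part x = σ.part z) : π.part x = π.part z :=
  (sqSubseteq_iff_part_eq_part.1 h).2 x y z hxz hzy hxy hσ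

lemma refl (π : NPart n) : SqSubseteq π π :=
  sqSubseteq_iff_part_eq_part.2 ⟨le_rfl, fun _ _ _ _ _ _ h => h⟩

lemma trans (h : SqSubseteq π σ) (h' : SqSubseteq σ ρ) : SqSubseteq π ρ :=
  sqSubseteq_iff_part_eq_part.2 ⟨h.le.trans h'.le, fun _ _ _ hxz hzy hxy hρ =>
    h.part_eq_part hxz hzy hxy (h'.part_eq_part hxz hzy (le_iff_part_eq_part.1 h.le _ _ hxy) hρ)⟩

lemma of_le (h : SqSubseteq π ρ) (hσρ : σ ≤ ρ) (hπσ : π ≤ σ) : SqSubseteq π σ :=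
  sqSubseteq_iff_part_eq_part.2 ⟨hπσ, fun _ _ _ hxz hzy hxy hσ =>
    h.part_eq_part hxz hzy hxy (le_iff_part_eq_part.1 hσρ _ _ hσ)⟩

lemma isNoncrossing (h : SqSubseteq σ ρ) (hρ : IsNoncrossing ρ) : IsNoncrossing σ :=
  isNoncrossing_iff_part_eq_part.2 fun a b c d hab hbc hcd hac hbd =>
    h.part_eq_part hab.le hbc.le hac (isNoncrossing_iff_part_eq_part.1 hρ a b c d hab hbc hcd
      (le_iff_part_eq_part.1 h.le _ _ hac) (le_iff_part_eq_part.1 h.le _ _ hbd))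

end SqSubseteq

/-- The set of maxima of the blocks of `σ`; among the partitions `σ ⊑ ρ` it determines `σ`. -/
noncomputable def blockMaxes (σ : NPart n) : Finset (Fin n) :=
  {e | ∀ j, σ.part j = σ.part e → j ≤ e}

lemma mem_blockMaxes {σ : NPart n} {e : Fin n} :
    e ∈ blockMaxes σ ↔ ∀ j, σ.part j = σ.part e → j ≤ e := by
  simp only [blockMaxes, Finset.mem_filter_univ]

lemma exists_mem_blockMaxes (σ : NPart n) (i : Fin n) :
    ∃ e ∈ blockMaxes σ, i ≤ e ∧ σ.part e = σ.part i := by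
  have hne : (σ.part i).Nonempty := ⟨i, mem_part_iff_part_eq.2 rfl⟩
  have hmax := mem_part_iff_part_eq.1 ((σ.part i).max'_mem hne)
  exact ⟨(σ.part i).max' hne,
    mem_blockMaxes.2 fun j hj => Finset.le_max' _ _ (mem_part_iff_part_eq.2 (hj.trans hmax)),
    Finset.le_max' _ _ (mem_part_iff_part_eq.2 rfl), hmax⟩

lemma card_blockMaxes (σ : NPart n) : (blockMaxes σ).card = σ.parts.card := by
  refine Finset.card_bij (fun e _ => σ.part e) (fun e _ => σ.part_mem.2 (Finset.mem_univ e))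
    (fun e he e' he' h => ?_) fun V hV => ?_
  · exact le_antisymm (mem_blockMaxes.1 he' e h) (mem_blockMaxes.1 he e' h.symm)
  · obtain ⟨i, hi⟩ := σ.nonempty_of_mem_parts hV
    obtain ⟨e, he, -, hei⟩ := exists_mem_blockMaxes σ i
    exact ⟨e, he, hei.trans (σ.part_eq_of_mem hV hi)⟩

lemma blockMaxes_subset_of_le {σ τ : NPart n} (h : σ ≤ τ) : blockMaxes τ ⊆ blockMaxes σ :=
  fun _ he => mem_blockMaxes.2 fun j hj => mem_blockMaxes.1 he j (le_iff_part_eq_part.1 h _ _ hj)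

open Classical in
/-- The partition obtained by cutting every block of `ρ` after each of its elements in `E`. -/
noncomputable def cutAfter (ρ : NPart n) (E : Finset (Fin n)) : NPart n :=
  Finpartition.ofSetoid <| Setoid.ker fun x =>
    (ρ.part x, ({e ∈ E | ρ.part e = ρ.part x ∧ x ≤ e} : Finset (Fin n)))

lemma part_cutAfter_eq_iff {ρ : NPart n} {E : Finset (Fin n)} {x y : Fin n} :
    (cutAfter ρ E).part x = (cutAfter ρ E).part y ↔
      ρ.part x = ρ.part y ∧ ∀ e ∈ E, ρ.part e = ρ.part x → (x ≤ e ↔ y ≤ e) := by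
  rw [cutAfter, part_ofSetoid_eq_iff, Setoid.ker_def, Prod.mk.injEq, Finset.filter_inj']
  refine and_congr_right fun hxy => forall₂_congr fun e _ => ?_
  rw [hxy]
  tauto

lemma cutAfter_anti (ρ : NPart n) {E E' : Finset (Fin n)} (h : E ⊆ E') :
    cutAfter ρ E' ≤ cutAfter ρ E :=
  le_iff_part_eq_part.2 fun _ _ hxy => part_cutAfter_eq_iff.2
    ((part_cutAfter_eq_iff.1 hxy).imp_right fun H e he => H e (h he))

lemma cutAfter_sqSubseteq (ρ : NPart n) (E : Finset (Fin n)) : SqSubseteq (cutAfter ρ E) ρ := by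
  refine sqSubseteq_iff_part_eq_part.2 ⟨le_iff_part_eq_part.2 fun _ _ h =>
    (part_cutAfter_eq_iff.1 h).1, fun x y z hxz hzy hxy hρ => ?_⟩
  refine part_cutAfter_eq_iff.2 ⟨hρ, fun e he hex => ⟨fun hx => ?_, hxz.trans⟩⟩
  exact hzy.trans (((part_cutAfter_eq_iff.1 hxy).2 e he hex).1 hx)

lemma blockMaxes_cutAfter {ρ : NPart n} {E : Finset (Fin n)} (hE : blockMaxes ρ ⊆ E) :
    blockMaxes (cutAfter ρ E) = E := by
  refine Finset.Subset.antisymm (fun x hx => ?_) fun e he => mem_blockMaxes.2 fun j hj => ?_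
  · obtain ⟨e₀, he₀, hxe₀, hex₀⟩ := exists_mem_blockMaxes ρ x
    obtain ⟨e, ⟨heE, hex, hxe⟩, hmin⟩ := exists_minimal_of_wellFoundedLT
      (fun e => e ∈ E ∧ ρ.part e = ρ.part x ∧ x ≤ e) ⟨e₀, hE he₀, hex₀, hxe₀⟩
    have hcut : (cutAfter ρ E).part e = (cutAfter ρ E).part x :=
      part_cutAfter_eq_iff.2 ⟨hex, fun e' he' hee' => ⟨hxe.trans, fun hxe' =>
        (le_total e e').elim id (hmin ⟨he', hee'.trans hex, hxe'⟩)⟩⟩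
    exact le_antisymm (mem_blockMaxes.1 hx e hcut) hxe ▸ heE
  · obtain ⟨hρ, h⟩ := part_cutAfter_eq_iff.1 hj
    exact (h e he hρ.symm).2 le_rfl

lemma SqSubseteq.cutAfter_blockMaxes {σ ρ : NPart n} (h : SqSubseteq σ ρ) :
    cutAfter ρ (blockMaxes σ) = σ := by
  refine le_antisymm (le_iff_part_eq_part.2 fun x y hxy => ?_)
    (le_iff_part_eq_part.2 fun x y hxy => ?_)
  · wlog hle : x ≤ y generalizing x y
    · exact (this y x hxy.symm (le_of_not_ge hle)).symm
    obtain ⟨hρ, hcut⟩ := part_cutAfter_eq_iff.1 hxy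
    obtain ⟨e, he, hxe, hex⟩ := exists_mem_blockMaxes σ x
    have hye : y ≤ e := (hcut e he (le_iff_part_eq_part.1 h.le _ _ hex)).1 hxe
    exact h.part_eq_part hle hye hex.symm hρ
  · have le_of_le {e x y : Fin n} (he : e ∈ blockMaxes σ) (hxy : σ.part x = σ.part y)
        (hex : ρ.part e = ρ.part x) (hxe : x ≤ e) : y ≤ e := by
      by_contra! hey
      have := h.part_eq_part hxe hey.le hxy hex.symm
      exact hey.not_ge (mem_blockMaxes.1 he y (hxy.symm.trans this))
    have hρ := le_iff_part_eq_part.1 h.le _ _ hxy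
    exact part_cutAfter_eq_iff.2 ⟨hρ, fun e he hex =>
      ⟨le_of_le he hxy hex, le_of_le he hxy.symm (hex.trans hρ)⟩⟩

lemma SqSubseteq.le_iff_blockMaxes_subset {π σ ρ : NPart n} (hπ : SqSubseteq π ρ)
    (hσ : SqSubseteq σ ρ) : π ≤ σ ↔ blockMaxes σ ⊆ blockMaxes π := by
  refine ⟨blockMaxes_subset_of_le, fun h => ?_⟩
  rw [← hπ.cutAfter_blockMaxes, ← hσ.cutAfter_blockMaxes]
  exact cutAfter_anti ρ h

open Classical in
/-- For `π ⊑ ρ` the partitions `π ⊑ σ ⊑ ρ` form a Boolean lattice: `σ` amounts to a choice of the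
block maxima of `π` that are not block maxima of `ρ`. -/
lemma sum_neg_one_pow_sqSubseteq (π ρ : NPart n) :
    ∑ σ with SqSubseteq π σ ∧ SqSubseteq σ ρ, (-1 : ℤ) ^ (π.parts.card - σ.parts.card) =
      if π = ρ then 1 else 0 := by
  by_cases hπ : SqSubseteq π ρ
  · have eq_iff : π = ρ ↔ blockMaxes π \ blockMaxes ρ = ∅ := by
      rw [Finset.sdiff_eq_empty_iff_subset,
        ← (SqSubseteq.refl ρ).le_iff_blockMaxes_subset hπ, le_antisymm_iff, and_iff_right hπ.le]
    have blockMaxes_cut {D} (hD : D ∈ (blockMaxes π \ blockMaxes ρ).powerset) :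
        blockMaxes (cutAfter ρ (blockMaxes π \ D)) = blockMaxes π \ D := by
      have := blockMaxes_subset_of_le hπ.le
      exact blockMaxes_cutAfter (by grind)
    have mem_filter {σ : NPart n} : σ ∈ ({σ | SqSubseteq π σ ∧ SqSubseteq σ ρ} : Finset _) ↔
        SqSubseteq π σ ∧ SqSubseteq σ ρ := Finset.mem_filter_univ σ
    simp_rw [eq_iff, ← Finset.sum_powerset_neg_one_pow_card]
    refine Finset.sum_nbij' (fun σ => blockMaxes π \ blockMaxes σ)
      (fun D => cutAfter ρ (blockMaxes π \ D)) (fun σ hσ => ?_) (fun D hD => ?_) (fun σ hσ => ?_)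
      (fun D hD => ?_) fun σ hσ => ?_
    · exact Finset.mem_powerset.2 (Finset.sdiff_subset_sdiff subset_rfl
        (blockMaxes_subset_of_le (mem_filter.1 hσ).2.le))
    · have hcut := cutAfter_sqSubseteq ρ (blockMaxes π \ D)
      refine mem_filter.2 ⟨hπ.of_le hcut.le ((hπ.le_iff_blockMaxes_subset hcut).2 ?_), hcut⟩
      exact (blockMaxes_cut hD).subset.trans Finset.sdiff_subset
    · obtain ⟨hπσ, hσρ⟩ := mem_filter.1 hσ
      rw [Finset.sdiff_sdiff_eq_self (blockMaxes_subset_of_le hπσ.le), hσρ.cutAfter_blockMaxes]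
    · rw [blockMaxes_cut hD, Finset.sdiff_sdiff_eq_self
        ((Finset.mem_powerset.1 hD).trans Finset.sdiff_subset)]
    · rw [Finset.card_sdiff_of_subset (blockMaxes_subset_of_le (mem_filter.1 hσ).1.le),
        card_blockMaxes, card_blockMaxes]
  · rw [if_neg (by rintro rfl; exact hπ (.refl π)), Finset.filter_false_of_mem, Finset.sum_empty]
    exact fun σ _ h => hπ (h.1.trans h.2)

end Partitions

section LevelPartitions

variable {n : ℕ}

/-- Two positions of a word are at the same level if they carry the same letter and no smaller
letter occurs between them. -/
def levelSetoid {ι α : Type*} [LinearOrder ι] [Preorder α] (w : ι → α) : Setoid ι where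
  r i j := w i = w j ∧ ∀ l ∈ Set.uIcc i j, w i ≤ w l
  iseqv :=
    { refl _ := ⟨rfl, by simp⟩
      symm {i j} h := ⟨h.1.symm, fun l hl => h.1 ▸ h.2 l (Set.uIcc_comm i j ▸ hl)⟩
      trans h h' := ⟨h.1.trans h'.1, fun l hl => (Set.uIcc_subset_uIcc_union_uIcc hl).elim
        (h.2 l) fun hl => h.1 ▸ h'.2 l hl⟩ }

open Classical in
/-- The partition of the positions of the word `w` into its level classes. -/
noncomputable def levelPart {α : Type*} [Preorder α] (w : Fin n → α) : NPart n :=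
  Finpartition.ofSetoid (levelSetoid w)

lemma part_levelPart_eq_iff {α : Type*} [Preorder α] {w : Fin n → α} {i j : Fin n} :
    (levelPart w).part i = (levelPart w).part j ↔ w i = w j ∧ ∀ l ∈ Set.uIcc i j, w i ≤ w l := by
  rw [levelPart, part_ofSetoid_eq_iff]
  rfl

lemma part_levelPart_eq_iff_of_le {α : Type*} [Preorder α] {w : Fin n → α} {i j : Fin n}
    (hij : i ≤ j) : (levelPart w).part i = (levelPart w).part j ↔
      w i = w j ∧ ∀ l, i ≤ l → l ≤ j → w i ≤ w l := by
  simp only [part_levelPart_eq_iff, Set.uIcc_of_le hij, Set.mem_Icc, and_imp]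

lemma isNoncrossing_levelPart {α : Type*} [PartialOrder α] (w : Fin n → α) :
    IsNoncrossing (levelPart w) := by
  refine isNoncrossing_iff_part_eq_part.2 fun a b c d hab hbc hcd hac hbd => ?_
  rw [part_levelPart_eq_iff_of_le (hab.trans hbc).le] at hac
  rw [part_levelPart_eq_iff_of_le (hbc.trans hcd).le] at hbd
  have : w a = w b := le_antisymm (hac.2 b hab.le hbc.le) (hac.1 ▸ hbd.2 c hbc.le hcd.le)
  exact (part_levelPart_eq_iff_of_le hab.le).2
    ⟨this, fun l hal hlb => hac.2 l hal (hlb.trans hbc.le)⟩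

lemma NestedIn.trans {U V W : Finset (Fin n)} (h : NestedIn U V) (h' : NestedIn V W) :
    NestedIn U W := fun u hu => by
  obtain ⟨⟨a, ha, hau⟩, b, hb, hub⟩ := h u hu
  obtain ⟨⟨a', ha', haa'⟩, -⟩ := h' a ha
  obtain ⟨-, b', hb', hbb'⟩ := h' b hb
  exact ⟨⟨a', ha', haa'.trans hau⟩, b', hb', hub.trans hbb'⟩

lemma IsNoncrossing.nestedIn_part {σ : NPart n} (hσ : IsNoncrossing σ) {i j l : Fin n}
    (hij : σ.part i = σ.part j) (hil : i ≤ l) (hlj : l ≤ j) :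
    NestedIn (σ.part l) (σ.part i) := by
  rw [isNoncrossing_iff_part_eq_part] at hσ
  by_cases hli : σ.part l = σ.part i
  · rw [hli]
    exact fun m hm => ⟨⟨m, hm, le_rfl⟩, m, hm, le_rfl⟩
  have hil' : i < l := hil.lt_of_ne (by rintro rfl; exact hli rfl)
  have hlj' : l < j := hlj.lt_of_ne (by rintro rfl; exact hli hij.symm)
  intro m hm
  rw [mem_part_iff_part_eq] at hm
  refine ⟨⟨i, mem_part_iff_part_eq.2 rfl, ?_⟩, j, mem_part_iff_part_eq.2 hij.symm, ?_⟩ <;>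
    by_contra! hlt
  · exact hli (hm.symm.trans (hσ m i l j hlt hil' hlj' hm hij))
  · exact hli (hσ i l j m hil' hlj' hlt hij hm.symm).symm

/-- The block of `σ` containing a given element. -/
def blockOf (σ : NPart n) (i : Fin n) : {V // V ∈ σ.parts} :=
  ⟨σ.part i, σ.part_mem.2 (Finset.mem_univ i)⟩

lemma blockOf_surjective (σ : NPart n) : Function.Surjective (blockOf σ) := fun V => by
  obtain ⟨i, hi⟩ := σ.nonempty_of_mem_parts V.2
  exact ⟨i, Subtype.ext (σ.part_eq_of_mem V.2 hi)⟩

variable {α : Type*} [PartialOrder α] {σ : NPart n}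

lemma sqSubseteq_levelPart_of_strict (hσ : IsNoncrossing σ) {f : {V // V ∈ σ.parts} → α}
    (hf : ∀ V W : {V // V ∈ σ.parts}, NestedIn W.1 V.1 → V ≠ W → f V < f W) :
    SqSubseteq σ (levelPart (f ∘ blockOf σ)) := by
  have nested {i j l : Fin n} (hij : σ.part i = σ.part j) (hl : l ∈ Set.uIcc i j) :
      NestedIn (σ.part l) (σ.part i) := by
    obtain ⟨hil, hlj⟩ | ⟨hjl, hli⟩ := Set.mem_uIcc.1 hl
    · exact hσ.nestedIn_part hij hil hlj
    · exact hij ▸ hσ.nestedIn_part hij.symm hjl hli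
  refine sqSubseteq_iff_part_eq_part.2 ⟨le_iff_part_eq_part.2 fun i j hij => ?_,
    fun x y z hxz hzy hxy hlevel => ?_⟩
  · refine part_levelPart_eq_iff.2 ⟨congrArg f (Subtype.ext hij), fun l hl => ?_⟩
    by_cases h : blockOf σ i = blockOf σ l
    · exact (congrArg f h).le
    · exact (hf _ _ (nested hij hl) h).le
  · by_contra hne
    exact (hf _ _ (hσ.nestedIn_part hxy hxz hzy) fun h => hne (congrArg Subtype.val h)).ne
      (part_levelPart_eq_iff.1 hlevel).1

lemma exists_strict_of_sqSubseteq_levelPart {w : Fin n → α} (h : SqSubseteq σ (levelPart w)) :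
    ∃ f : {V // V ∈ σ.parts} → α,
      (∀ V W : {V // V ∈ σ.parts}, NestedIn W.1 V.1 → V ≠ W → f V < f W) ∧
        f ∘ blockOf σ = w := by
  have level {i j : Fin n} (hij : σ.part i = σ.part j) : w i = w j :=
    (part_levelPart_eq_iff.1 (le_iff_part_eq_part.1 h.le i j hij)).1
  let g := Function.surjInv (blockOf_surjective σ)
  have part_g (V : {V // V ∈ σ.parts}) : σ.part (g V) = V.1 :=
    congrArg Subtype.val (Function.surjInv_eq (blockOf_surjective σ) V)
  refine ⟨w ∘ g, fun V W hWV hVW => ?_, funext fun i => level (part_g _)⟩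
  obtain ⟨⟨a, ha, haW⟩, b, hb, hWb⟩ := hWV (g W) (σ.part_eq_iff_mem W.2 |>.1 (part_g W))
  rw [← part_g V, mem_part_iff_part_eq] at ha hb
  obtain ⟨-, hmin⟩ := (part_levelPart_eq_iff_of_le (haW.trans hWb)).1
    (le_iff_part_eq_part.1 h.le a b (ha.trans hb.symm))
  rw [Function.comp_apply, ← level ha]
  refine (hmin _ haW hWb).lt_of_ne fun heq => hVW (Subtype.ext ?_)
  have hlevel := (part_levelPart_eq_iff_of_le haW).2
    ⟨heq, fun l hal hlW => hmin l hal (hlW.trans hWb)⟩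
  rw [← part_g V, ← part_g W, ← ha]
  exact h.part_eq_part haW hWb (ha.trans hb.symm) hlevel

lemma omegaNestK_eq_card_words (hσ : IsNoncrossing σ) (k : ℕ) : omegaNestK σ k =
    Nat.card {w : Fin n → Fin k // Function.Surjective w ∧ SqSubseteq σ (levelPart w)} := by
  rw [omegaNestK, card_surjective_eq_card_comp (blockOf_surjective σ)]
  refine Nat.card_congr (Equiv.subtypeEquivRight fun w => and_congr_right fun _ =>
    ⟨?_, exists_strict_of_sqSubseteq_levelPart⟩)
  rintro ⟨f, hf, rfl⟩
  exact sqSubseteq_levelPart_of_strict hσ hf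

/-- The words with letters `{1, …, k}`, all of them used, whose level partition is `π`. -/
def levelWords (π : NPart n) (k : ℕ) : Set (Fin n → Fin k) :=
  {w | Function.Surjective w ∧ levelPart w = π}

open Classical in
lemma sum_sign_mul_omegaNestK (π : NPart n) (k : ℕ) :
    ∑ σ with IsNoncrossing σ ∧ SqSubseteq π σ,
      (-1 : ℤ) ^ (π.parts.card - σ.parts.card) * omegaNestK σ k = (levelWords π k).ncard := by
  have card_eq (σ : NPart n) (hσ : IsNoncrossing σ) : (omegaNestK σ k : ℤ) =
      ∑ w : Fin n → Fin k with Function.Surjective w,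
        if SqSubseteq σ (levelPart w) then 1 else 0 := by
    rw [omegaNestK_eq_card_words hσ, Nat.card_eq_fintype_card, Fintype.card_subtype,
      Finset.sum_boole, Finset.filter_filter]
  calc
    _ = ∑ σ with IsNoncrossing σ ∧ SqSubseteq π σ, ∑ w : Fin n → Fin k with Function.Surjective w,
        if SqSubseteq σ (levelPart w) then (-1 : ℤ) ^ (π.parts.card - σ.parts.card) else 0 := by
      refine Finset.sum_congr rfl fun σ hσ => ?_
      rw [card_eq σ (Finset.mem_filter.1 hσ).2.1, Finset.mul_sum]
      simp_rw [mul_ite, mul_one, mul_zero]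
    _ = ∑ w : Fin n → Fin k with Function.Surjective w, if π = levelPart w then (1 : ℤ) else 0 := by
      rw [Finset.sum_comm]
      refine Finset.sum_congr rfl fun w _ => ?_
      rw [← sum_neg_one_pow_sqSubseteq, ← Finset.sum_filter, Finset.filter_filter]
      refine Finset.sum_congr (Finset.filter_congr fun σ _ => ?_) fun _ _ => rfl
      exact ⟨fun h => ⟨h.1.2, h.2⟩, fun h =>
        ⟨⟨h.2.isNoncrossing (isNoncrossing_levelPart w), h.1⟩, h.2⟩⟩
    _ = (levelWords π k).ncard := by
      rw [Finset.sum_boole, Finset.filter_filter, ← Set.ncard_coe_finset]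
      simp [levelWords, eq_comm]

end LevelPartitions

section IrreducibleReduction

variable {n : ℕ} {σ : NPart n}

lemma omegaNestK_eq_strictSurjCount (k : ℕ) : omegaNestK σ k =
    strictSurjCount (fun V W : {V // V ∈ σ.parts} => NestedIn W.1 V.1 ∧ V ≠ W) k := by
  simp only [omegaNestK, strictSurjCount, and_imp]

lemma omegaNest_eq_muruaCoeff : omegaNest σ =
    muruaCoeff fun V W : {V // V ∈ σ.parts} => NestedIn W.1 V.1 ∧ V ≠ W := by
  simp only [omegaNest, omegaNestK_eq_strictSurjCount, cast_muruaCoeff_eq_sum_Icc _ le_rfl,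
    Nat.card_eq_fintype_card, Fintype.card_coe]

lemma omegaNest_eq_sum_Icc (σ : NPart n) : omegaNest σ =
    ∑ k ∈ Finset.Icc 1 n, (-1 : ℂ) ^ (k + 1) / k * omegaNestK σ k := by
  have card_le : Nat.card {V // V ∈ σ.parts} ≤ n := by simpa using σ.card_parts_le_card
  rw [omegaNest_eq_muruaCoeff, cast_muruaCoeff_eq_sum_Icc _ card_le]
  simp_rw [omegaNestK_eq_strictSurjCount]

/-- The nesting forest of a reducible noncrossing partition has several roots. -/
lemma omegaNest_eq_zero (hσ : IsNoncrossing σ) (hirr : ¬ IsIrreducibleNC σ) :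
    omegaNest σ = 0 := by
  obtain _ | n := n
  · rw [omegaNest_eq_sum_Icc, Finset.Icc_eq_empty (by decide), Finset.sum_empty]
  have zero_mem : (0 : Fin (n + 1)) ∈ σ.part 0 := mem_part_iff_part_eq.2 rfl
  have last_notMem : Fin.last n ∉ σ.part 0 := by
    exact fun h => hirr ⟨σ.part 0, σ.part_mem.2 (Finset.mem_univ 0),
      fun i hi => (Fin.ext hi : i = 0) ▸ zero_mem, fun i hi => (Fin.ext hi : i = Fin.last n) ▸ h⟩
  have nested_iff (v w : {V // V ∈ σ.parts}) (hwv : NestedIn w.1 v.1 ∧ v ≠ w) :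
      NestedIn v.1 (σ.part 0) ↔ NestedIn w.1 (σ.part 0) := by
    refine ⟨hwv.1.trans, fun hw => ?_⟩
    obtain ⟨i, hi⟩ := σ.nonempty_of_mem_parts w.2
    obtain ⟨-, c, hc, hic⟩ := hw i hi
    obtain ⟨⟨a, ha, hai⟩, -⟩ := hwv.1 i hi
    rw [← σ.part_eq_of_mem v.2 ha]
    exact hσ.nestedIn_part (mem_part_iff_part_eq.1 hc).symm (Fin.zero_le a) (hai.trans hic)
  have last_not_nested : ¬ NestedIn (σ.part (Fin.last n)) (σ.part 0) := fun h => by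
    obtain ⟨-, b, hb, hlast⟩ := h _ (mem_part_iff_part_eq.2 rfl)
    exact last_notMem (Fin.last_le_iff.1 hlast ▸ hb)
  rw [omegaNest_eq_muruaCoeff, muruaCoeff_eq_zero_of_disconnected _ nested_iff
    ⟨blockOf σ 0, fun m hm => ⟨⟨m, hm, le_rfl⟩, m, hm, le_rfl⟩⟩
    ⟨blockOf σ (Fin.last n), last_not_nested⟩, Rat.cast_zero]

lemma finsum_irreducible_eq_sum_levelWords (π : NPart n) :
    ∑ᶠ σ ∈ {σ : NPart n | IsNoncrossing σ ∧ IsIrreducibleNC σ ∧ SqSubseteq π σ},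
        (-1 : ℂ) ^ (π.parts.card - σ.parts.card) * omegaNest σ =
      ∑ k ∈ Finset.Icc 1 n, (-1 : ℂ) ^ (k + 1) / k * (levelWords π k).ncard := by
  classical
  calc
    _ = ∑ σ : NPart n with IsNoncrossing σ ∧ SqSubseteq π σ,
        (-1 : ℂ) ^ (π.parts.card - σ.parts.card) * omegaNest σ := by
      rw [finsum_mem_eq_finite_toFinset_sum _ (Set.toFinite _)]
      refine Finset.sum_subset (fun σ hσ => ?_) fun σ hσ hσ' => ?_
      · obtain ⟨hnc, -, hle⟩ := (Set.Finite.mem_toFinset _).1 hσ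
        exact (Finset.mem_filter_univ σ).2 ⟨hnc, hle⟩
      · obtain ⟨hnc, hle⟩ := (Finset.mem_filter_univ σ).1 hσ
        rw [omegaNest_eq_zero hnc fun hirr => hσ' ((Set.Finite.mem_toFinset _).2 ⟨hnc, hirr, hle⟩),
          mul_zero]
    _ = ∑ k ∈ Finset.Icc 1 n, (-1 : ℂ) ^ (k + 1) / k *
        ∑ σ : NPart n with IsNoncrossing σ ∧ SqSubseteq π σ,
          (-1 : ℂ) ^ (π.parts.card - σ.parts.card) * omegaNestK σ k := by
      simp_rw [omegaNest_eq_sum_Icc, Finset.mul_sum]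
      rw [Finset.sum_comm]
      exact Finset.sum_congr rfl fun k _ => Finset.sum_congr rfl fun σ _ => mul_left_comm _ _ _
    _ = _ := by
      refine Finset.sum_congr rfl fun k _ => ?_
      congr 1
      exact_mod_cast congrArg (Int.cast : ℤ → ℂ) (sum_sign_mul_omegaNestK π k)

end IrreducibleReduction

section Intercalate

variable {α : Type*} {x y : α} {l : List α} {Ls : List (List α)}

lemma getElem?_flatten_eq_some_iff {i : ℕ} : Ls.flatten[i]? = some y ↔
    ∃ j l i', Ls[j]? = some l ∧ l[i']? = some y ∧ i = ((Ls.take j).map List.length).sum + i' := by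
  induction Ls generalizing i with
  | nil => simp
  | cons l Ls ih =>
    rw [List.flatten_cons, List.getElem?_append]
    split_ifs with hi
    · refine ⟨fun h => ⟨0, l, i, rfl, h, by simp⟩, ?_⟩
      rintro ⟨_ | j, _, i', hj, hi', rfl⟩
      · cases hj
        simpa using hi'
      · simp only [List.take_succ_cons, List.map_cons, List.sum_cons] at hi
        omega
    · rw [ih]
      constructor
      · rintro ⟨j, l', i', hj, hi', hsum⟩
        refine ⟨j + 1, l', i', hj, hi', ?_⟩
        rw [List.take_succ_cons, List.map_cons, List.sum_cons]
        omega
      · rintro ⟨_ | j, l', i', hj, hi', rfl⟩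
        · cases hj
          simp [(List.getElem?_eq_some_iff.1 hi').1] at hi
        · refine ⟨j, l', i', hj, hi', ?_⟩
          rw [List.take_succ_cons, List.map_cons, List.sum_cons]
          omega

lemma cons_intercalate_singleton (h : Ls ≠ []) :
    x :: [x].intercalate Ls = (Ls.map (x :: ·)).flatten := by
  induction Ls with
  | nil => contradiction
  | cons l Ls ih =>
    rcases eq_or_ne Ls [] with rfl | hLs
    · simp
    · simp [List.intercalate_cons_of_ne_nil hLs, ih hLs]

lemma map_intercalate_singleton {β : Type*} (f : α → β) (x : α) (Ls : List (List α)) :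
    ([x].intercalate Ls).map f = [f x].intercalate (Ls.map (List.map f)) := by
  rcases eq_or_ne Ls [] with rfl | hLs
  · rfl
  · rw [← (List.cons_injective (a := f x)).eq_iff, cons_intercalate_singleton (by simpa),
      ← List.map_cons, cons_intercalate_singleton hLs, List.map_flatten, List.map_map, List.map_map]
    rfl

lemma sublist_intercalate_singleton (x : α) (h : l ∈ Ls) : l.Sublist ([x].intercalate Ls) := by
  rw [← List.cons_sublist_cons (a := x), cons_intercalate_singleton (List.ne_nil_of_mem h)]
  exact List.sublist_flatten_of_mem (List.mem_map_of_mem h)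

lemma mem_intercalate_singleton_self (h : 2 ≤ Ls.length) : x ∈ [x].intercalate Ls := by
  match Ls, h with
  | l :: l' :: Ls, _ => simp [List.intercalate_cons_cons]

lemma length_lt_length_intercalate_singleton (hLs : 2 ≤ Ls.length) (hl : l ∈ Ls) (hx : x ∉ l) :
    l.length < ([x].intercalate Ls).length :=
  have hsub := sublist_intercalate_singleton x hl
  hsub.length_le.lt_of_ne fun h =>
    hx (hsub.eq_of_length h ▸ mem_intercalate_singleton_self hLs)

lemma exists_intercalate_singleton_eq (x : α) (L : List α) :
    ∃ Ls ≠ [], (∀ l ∈ Ls, x ∉ l) ∧ [x].intercalate Ls = L := by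
  by_cases hx : x ∈ L
  · obtain ⟨l, L', rfl, hl⟩ := List.eq_append_cons_of_mem hx
    obtain ⟨Ls, hne, hLs, rfl⟩ := exists_intercalate_singleton_eq x L'
    exact ⟨l :: Ls, by simp, by simpa [hl] using hLs, by simp [List.intercalate_cons_of_ne_nil hne]⟩
  · exact ⟨[L], by simp, by simpa using hx, List.intercalate_singleton⟩
termination_by L.length

end Intercalate

section Owners

namespace PTree

variable {cs : List PTree} {c t : PTree} {j : ℕ} {p : List ℕ}

@[elab_as_elim]
lemma induction_on {P : PTree → Prop} (t : PTree)
    (node : ∀ cs, (∀ c ∈ cs, P c) → P (node cs)) : P t :=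
  PTree.rec (motive_2 := fun cs => ∀ c ∈ cs, P c) node (by simp) (fun _ _ => by simp +contextual) t

lemma isLeafAt_nil : IsLeafAt (node cs) [] ↔ cs = [] := by
  simp [IsLeafAt, subtreeAt]

lemma isLeafAt_cons :
    IsLeafAt (node cs) (j :: p) ↔ ∃ c, cs[j]? = some c ∧ IsLeafAt c p := by
  simp [IsLeafAt, subtreeAt, Option.bind_eq_some_iff]

lemma isInternalAt_nil : IsInternalAt (node cs) [] ↔ cs ≠ [] := by
  simp [IsInternalAt, subtreeAt]

lemma isInternalAt_cons :
    IsInternalAt (node cs) (j :: p) ↔ ∃ c, cs[j]? = some c ∧ IsInternalAt c p := by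
  cases h : cs[j]? <;> simp [IsInternalAt, subtreeAt, h]

lemma finite_leaves (t : PTree) : {p | IsLeafAt t p}.Finite := by
  induction t using induction_on with
  | node cs ih =>
    have finite_branches : (⋃ j : Fin cs.length, List.cons j.1 '' {p | IsLeafAt cs[j] p}).Finite :=
      Set.finite_iUnion fun j => (ih _ (List.getElem_mem _)).image _
    refine (finite_branches.insert []).subset ?_
    rintro (_ | ⟨j, p⟩) hp
    · exact Set.mem_insert _ _
    · obtain ⟨c, hc, hp⟩ := isLeafAt_cons.1 hp
      obtain ⟨hj, rfl⟩ := List.getElem?_eq_some_iff.1 hc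
      exact Set.mem_insert_of_mem _ (Set.mem_iUnion.2 ⟨⟨j, hj⟩, p, hp, rfl⟩)

lemma numLeaves_leaf : numLeaves leaf = 1 := by
  have : {p | IsLeafAt leaf p} = {[]} := by
    ext (_ | ⟨j, p⟩) <;> simp [isLeafAt_nil, isLeafAt_cons]
  exact (congrArg Set.ncard this).trans (Set.ncard_singleton _)

/-- The number of leaves of the first `j` trees of `cs`. -/
noncomputable def leafOffset (cs : List PTree) (j : ℕ) : ℕ :=
  ((cs.take j).map numLeaves).sum

lemma leafOffset_succ (hc : cs[j]? = some c) :
    leafOffset cs (j + 1) = leafOffset cs j + numLeaves c := by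
  simp [leafOffset, List.take_add_one, hc]

lemma leafOffset_mono (cs : List PTree) : Monotone (leafOffset cs) :=
  monotone_nat_of_le_succ fun j => by simp [leafOffset, List.take_add_one]

lemma ncard_leaves_lt (hj : j ≤ cs.length) :
    {q | IsLeafAt (node cs) q ∧ ∃ i < j, ∃ p, q = i :: p}.ncard = leafOffset cs j := by
  induction j with
  | zero => simp [leafOffset]
  | succ j ih =>
    have hc := List.getElem?_eq_getElem (Nat.lt_of_succ_le hj)
    have decomp : {q | IsLeafAt (node cs) q ∧ ∃ i < j + 1, ∃ p, q = i :: p} =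
        {q | IsLeafAt (node cs) q ∧ ∃ i < j, ∃ p, q = i :: p} ∪
          List.cons j '' {p | IsLeafAt cs[j] p} := by
      ext (_ | ⟨i, p⟩)
      · simp
      · simp only [Set.mem_ofPred_eq, isLeafAt_cons, List.cons.injEq, Set.mem_union, Set.mem_image]
        grind
    rw [decomp, Set.ncard_union_eq _ ((finite_leaves _).subset fun _ h => h.1)
      ((finite_leaves _).image _), Set.ncard_image_of_injective _ List.cons_injective,
      ih (Nat.le_of_succ_le hj), leafOffset_succ hc]
    · rfl
    · rw [Set.disjoint_left]
      rintro _ ⟨-, i, hi, p, rfl⟩ ⟨p', -, h⟩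
      exact hi.ne (List.cons.inj h).1.symm

lemma numLeaves_node (hcs : cs ≠ []) : numLeaves (node cs) = leafOffset cs cs.length := by
  rw [← ncard_leaves_lt le_rfl]
  refine congrArg Set.ncard (Set.ext fun q => (and_iff_left_of_imp fun hq => ?_).symm)
  obtain _ | ⟨j, p⟩ := q
  · exact absurd (isLeafAt_nil.1 hq) hcs
  · obtain ⟨c, hc, -⟩ := isLeafAt_cons.1 hq
    exact ⟨j, (List.getElem?_eq_some_iff.1 hc).1, p, rfl⟩

lemma leavesBefore_nil (t : PTree) : leavesBefore t [] = 0 := by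
  simp [leavesBefore]

lemma leavesBefore_cons (hc : cs[j]? = some c) (p : List ℕ) :
    leavesBefore (node cs) (j :: p) = leafOffset cs j + leavesBefore c p := by
  have hj := (List.getElem?_eq_some_iff.1 hc).1
  have decomp : {q | IsLeafAt (node cs) q ∧ List.Lex (· < ·) q (j :: p) ∧ ¬ (j :: p) <+: q} =
      {q | IsLeafAt (node cs) q ∧ ∃ i < j, ∃ p, q = i :: p} ∪
        List.cons j '' {q | IsLeafAt c q ∧ List.Lex (· < ·) q p ∧ ¬ p <+: q} := by
    ext (_ | ⟨i, q⟩)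
    · have : cs ≠ [] := List.ne_nil_of_length_pos (by omega)
      simp [isLeafAt_nil, this]
    · simp only [List.lex_lt, Set.mem_ofPred_eq, isLeafAt_cons, List.cons_lt_cons_iff,
        List.cons_prefix_cons, Set.mem_union, List.cons.injEq, Set.mem_image]
      grind
  change Set.ncard {q | _} = _ + Set.ncard {q | _}
  rw [decomp, Set.ncard_union_eq _ ((finite_leaves _).subset fun _ h => h.1)
    (((finite_leaves c).subset fun _ h => h.1).image _),
    Set.ncard_image_of_injective _ List.cons_injective, ncard_leaves_lt hj.le]
  rw [Set.disjoint_left]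
  rintro _ ⟨-, i, hi, p, rfl⟩ ⟨p', -, h⟩
  exact hi.ne (List.cons.inj h).1.symm

/-- The word whose `i`-th letter is the internal vertex owning the `i`-th sector: the words of the
branches, separated by the root. -/
def owners : PTree → List (List ℕ)
  | node cs =>
    [[]].intercalate (List.ofFn fun j : Fin cs.length => (owners cs[j]).map (List.cons j.1))
decreasing_by
  have := List.sizeOf_lt_of_mem (List.getElem_mem j.2)
  simp only [Fin.getElem_fin, PTree.node.sizeOf_spec]
  omega

/-- The owner words of the branches of `node cs`, as vertices of `node cs`. -/
def branchOwners (cs : List PTree) : List (List (List ℕ)) :=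
  cs.mapIdx fun j c => (owners c).map (List.cons j)

lemma owners_node (cs : List PTree) : owners (node cs) = [[]].intercalate (branchOwners cs) := by
  rw [owners, branchOwners, List.mapIdx_eq_ofFn]
  rfl

lemma mem_branchOwners {l : List (List ℕ)} : l ∈ branchOwners cs ↔
    ∃ j c, cs[j]? = some c ∧ (owners c).map (List.cons j) = l := by
  simp only [List.mem_iff_getElem?, branchOwners, List.getElem?_mapIdx, Option.map_eq_some_iff]

lemma cons_owners_node (hcs : cs ≠ []) :
    [] :: owners (node cs) = ((branchOwners cs).map ([] :: ·)).flatten := by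
  rw [owners_node, cons_intercalate_singleton (by simpa [branchOwners] using hcs)]

lemma sum_length_branchOwners (j : ℕ)
    (length_owners : ∀ c ∈ cs, (owners c).length + 1 = numLeaves c) :
    ((((branchOwners cs).map ([] :: ·)).take j).map List.length).sum = leafOffset cs j := by
  rw [leafOffset, List.map_take, List.map_take]
  congr 2
  refine List.ext_getElem? fun i => ?_
  cases hc : cs[i]? with
  | none => simp [branchOwners, hc]
  | some c => simp [branchOwners, hc, length_owners c (List.mem_of_getElem? hc)]

lemma length_owners_add_one (t : PTree) : (owners t).length + 1 = numLeaves t := by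
  induction t using induction_on with
  | node cs ih =>
    rcases eq_or_ne cs [] with rfl | hcs
    · simp [owners_node, branchOwners, numLeaves_leaf]
    · have take_all : ((branchOwners cs).map ([] :: ·)).take cs.length =
          (branchOwners cs).map ([] :: ·) := List.take_of_length_le (by simp [branchOwners])
      rw [numLeaves_node hcs, ← List.length_cons (a := []), cons_owners_node hcs,
        List.length_flatten, ← sum_length_branchOwners _ ih, take_all]

lemma getElem?_cons_owners_node (hcs : cs ≠ []) {i : ℕ} {v : List ℕ} :
    ([] :: owners (node cs))[i]? = some v ↔
      ∃ j c i', cs[j]? = some c ∧ ([] :: (owners c).map (List.cons j))[i']? = some v ∧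
        i = leafOffset cs j + i' := by
  rw [cons_owners_node hcs, getElem?_flatten_eq_some_iff]
  simp only [sum_length_branchOwners _ fun c _ => length_owners_add_one c]
  refine exists_congr fun j => ?_
  cases hc : cs[j]? <;> simp [branchOwners, hc]

lemma getElem?_owners_nil {i : ℕ} : (owners (node cs))[i]? = some [] ↔
    ∃ j, j < cs.length ∧ i + 1 = leafOffset cs j := by
  rcases eq_or_ne cs [] with rfl | hcs
  · simp [owners_node, branchOwners]
  rw [← List.getElem?_cons_succ (a := []), getElem?_cons_owners_node hcs]
  constructor
  · rintro ⟨j, c, _ | i', hc, hi', hi⟩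
    · exact ⟨j, (List.getElem?_eq_some_iff.1 hc).1, hi⟩
    · simp at hi'
  · rintro ⟨j, hj, hi⟩
    exact ⟨j, cs[j], 0, List.getElem?_eq_getElem hj, rfl, hi⟩

lemma getElem?_owners_cons {i : ℕ} : (owners (node cs))[i]? = some (j :: p) ↔
    ∃ c i', cs[j]? = some c ∧ (owners c)[i']? = some p ∧ i = leafOffset cs j + i' := by
  rcases eq_or_ne cs [] with rfl | hcs
  · simp [owners_node, branchOwners]
  rw [← List.getElem?_cons_succ (a := []), getElem?_cons_owners_node hcs]
  constructor
  · rintro ⟨j', c, _ | i', hc, hi', hi⟩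
    · simp at hi'
    · obtain ⟨hp, rfl⟩ : (owners c)[i']? = some p ∧ j' = j := by simpa using hi'
      exact ⟨c, i', hc, hp, by omega⟩
  · rintro ⟨c, i', hc, hi', rfl⟩
    exact ⟨j, c, i' + 1, hc, by simp [hi'], by omega⟩

end PTree

end Owners

section Sectors

namespace PTree

variable {cs : List PTree} {c t : PTree} {i j l : ℕ} {p u v : List ℕ}

lemma isInternalAt_of_mem_owners (hv : v ∈ owners t) : IsInternalAt t v := by
  obtain ⟨i, hi⟩ := List.mem_iff_getElem?.1 hv
  induction v generalizing t i with
  | nil =>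
    obtain ⟨cs⟩ := t
    obtain ⟨j, hj, -⟩ := getElem?_owners_nil.1 hi
    exact isInternalAt_nil.2 (List.ne_nil_of_length_pos (by omega))
  | cons j p ih =>
    obtain ⟨cs⟩ := t
    obtain ⟨c, i', hc, hi', -⟩ := getElem?_owners_cons.1 hi
    exact isInternalAt_cons.2 ⟨c, hc, ih (List.mem_of_getElem? hi') i' hi'⟩

lemma SectorIn.of_mem_Icc (hi : SectorIn t p i) (hj : SectorIn t p j) (hil : i ≤ l) (hlj : l ≤ j) :
    SectorIn t p l :=
  ⟨hi.1.trans hil, (Nat.add_le_add_right hlj 2).trans hj.2⟩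

lemma sectorIn_nil : SectorIn t [] i ↔ i < (owners t).length := by
  rw [SectorIn, leavesBefore_nil, subtree!, subtreeAt, Option.getD_some, ← length_owners_add_one]
  omega

lemma sectorIn_cons (hc : cs[j]? = some c) :
    SectorIn (node cs) (j :: p) i ↔ ∃ i', SectorIn c p i' ∧ i = leafOffset cs j + i' := by
  have subtree_eq : subtree! (node cs) (j :: p) = subtree! c p := by
    simp [subtree!, subtreeAt, hc]
  rw [SectorIn, leavesBefore_cons hc, subtree_eq]
  constructor
  · rintro ⟨h, h'⟩
    exact ⟨i - leafOffset cs j, ⟨by omega, by omega⟩, by omega⟩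
  · rintro ⟨i', ⟨h, h'⟩, rfl⟩
    exact ⟨by omega, by omega⟩

lemma not_sectorIn_cons (hc : cs[j]? = none) : ¬ SectorIn (node cs) (j :: p) i := by
  have subtree_eq : subtree! (node cs) (j :: p) = leaf := by
    simp [subtree!, subtreeAt, hc]
  rintro ⟨h, h'⟩
  rw [subtree_eq, numLeaves_leaf] at h'
  omega

lemma sectorIn_iff : SectorIn t p i ↔ ∃ v, (owners t)[i]? = some v ∧ p <+: v := by
  induction p generalizing t i with
  | nil => simp [sectorIn_nil, ← Option.isSome_iff_exists]
  | cons j p ih =>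
    obtain ⟨cs⟩ := t
    cases hc : cs[j]? with
    | none =>
      refine iff_of_false (not_sectorIn_cons hc) ?_
      rintro ⟨_, hv, q, rfl⟩
      obtain ⟨c, -, hc', -⟩ := getElem?_owners_cons.1 hv
      simp [hc] at hc'
    | some c =>
      simp_rw [sectorIn_cons hc, ih]
      constructor
      · rintro ⟨i', ⟨v, hv, hpv⟩, rfl⟩
        exact ⟨j :: v, getElem?_owners_cons.2 ⟨c, i', hc, hv, rfl⟩,
          List.cons_prefix_cons.2 ⟨rfl, hpv⟩⟩
      · rintro ⟨_, hv, q, rfl⟩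
        obtain ⟨c', i', hc', hv, rfl⟩ := getElem?_owners_cons.1 hv
        obtain rfl : c = c' := by simpa [hc] using hc'
        exact ⟨i', ⟨_, hv, List.prefix_append p q⟩, rfl⟩

lemma ownsSector_iff : OwnsSector t v i ↔ (owners t)[i]? = some v := by
  constructor
  · rintro ⟨-, hi, hmax⟩
    obtain ⟨x, hx, hvx⟩ := sectorIn_iff.1 hi
    by_contra hne
    exact hmax x (isInternalAt_of_mem_owners (List.mem_of_getElem? hx)) hvx
      (by rintro rfl; exact hne hx) (sectorIn_iff.2 ⟨x, hx, List.prefix_rfl⟩)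
  · refine fun hv => ⟨isInternalAt_of_mem_owners (List.mem_of_getElem? hv),
      sectorIn_iff.2 ⟨v, hv, List.prefix_rfl⟩, fun w _ hvw hne hw => hne ?_⟩
    obtain ⟨x, hx, hwx⟩ := sectorIn_iff.1 hw
    obtain rfl : v = x := by simpa [hv] using hx
    exact hwx.eq_of_length_le hvw.length_le

lemma prefix_owner_between (hil : i ≤ l) (hlj : l ≤ j) (hi : (owners t)[i]? = some v)
    (hj : (owners t)[j]? = some v) (hl : (owners t)[l]? = some u) : v <+: u := by
  have hv : SectorIn t v l := SectorIn.of_mem_Icc (sectorIn_iff.2 ⟨v, hi, List.prefix_rfl⟩)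
    (sectorIn_iff.2 ⟨v, hj, List.prefix_rfl⟩) hil hlj
  obtain ⟨x, hx, hvx⟩ := sectorIn_iff.1 hv
  obtain rfl : u = x := by simpa [hl] using hx
  exact hvx

lemma add_one_lt_leafOffset_succ (hc : cs[j]? = some c) (hi : (owners c)[i]? = some v) :
    leafOffset cs j + i + 1 < leafOffset cs (j + 1) := by
  have hlt := (List.getElem?_eq_some_iff.1 hi).1
  rw [leafOffset_succ hc, ← length_owners_add_one]
  omega

/-- Sectors in distinct branches of a vertex are separated by a sector owned by that vertex. -/
lemma exists_common_prefix_owner_between (hij : i ≤ j) (hi : (owners t)[i]? = some u)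
    (hj : (owners t)[j]? = some v) :
    ∃ l x, i ≤ l ∧ l ≤ j ∧ (owners t)[l]? = some x ∧ x <+: u ∧ x <+: v := by
  induction u generalizing t i j v with
  | nil => exact ⟨i, [], le_rfl, hij, hi, List.nil_prefix, List.nil_prefix⟩
  | cons a p ih =>
    obtain _ | ⟨b, q⟩ := v
    · exact ⟨j, [], hij, le_rfl, hj, List.nil_prefix, List.nil_prefix⟩
    obtain ⟨cs⟩ := t
    obtain ⟨c, i, hc, hp, rfl⟩ := getElem?_owners_cons.1 hi
    obtain ⟨d, j, hd, hq, rfl⟩ := getElem?_owners_cons.1 hj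
    have hi_lt := add_one_lt_leafOffset_succ hc hp
    have hj_lt := add_one_lt_leafOffset_succ hd hq
    have hb := (List.getElem?_eq_some_iff.1 hd).1
    obtain hab | rfl | hba := lt_trichotomy a b
    · have : leafOffset cs (a + 1) ≤ leafOffset cs b := leafOffset_mono cs hab
      have hroot := getElem?_owners_nil.2 ⟨b, hb, Nat.sub_add_cancel (by omega)⟩
      exact ⟨_, [], by omega, by omega, hroot, List.nil_prefix, List.nil_prefix⟩
    · obtain rfl : c = d := by simpa [hc] using hd
      obtain ⟨l, x, hil, hlj, hx, hxp, hxq⟩ := ih (by omega) hp hq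
      exact ⟨_, a :: x, by omega, by omega, getElem?_owners_cons.2 ⟨c, l, hc, hx, rfl⟩,
        List.cons_prefix_cons.2 ⟨rfl, hxp⟩, List.cons_prefix_cons.2 ⟨rfl, hxq⟩⟩
    · have : leafOffset cs (b + 1) ≤ leafOffset cs a := leafOffset_mono cs hba
      omega

end PTree

end Sectors

section StrictLabellings

namespace PTree

variable {α : Type*} {cs : List PTree} {c t : PTree} {i j : ℕ} {p u v : List ℕ}

/-- The function `F` on paths, restricted to the internal vertices of `t`, is strictly increasing
away from the root. Its values on other paths are irrelevant. -/
def IsStrictLabelling [Preorder α] (t : PTree) (F : List ℕ → α) : Prop :=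
  ∀ v w, IsInternalAt t v → IsInternalAt t w → v <+: w → v ≠ w → F v < F w

lemma isStrictLabelling_node_iff [Preorder α] {F : List ℕ → α} :
    IsStrictLabelling (node cs) F ↔ (∀ j p, IsInternalAt (node cs) (j :: p) → F [] < F (j :: p)) ∧
      ∀ j c, cs[j]? = some c → IsStrictLabelling c (F ∘ List.cons j) := by
  constructor
  · refine fun h => ⟨fun j p hp => ?_, fun j c hc v w hv hw hvw hne => ?_⟩
    · obtain ⟨c, hc, -⟩ := isInternalAt_cons.1 hp
      have hroot : IsInternalAt (node cs) [] := isInternalAt_nil.2 (by rintro rfl; simp at hc)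
      exact h [] (j :: p) hroot hp List.nil_prefix (List.cons_ne_nil j p).symm
    · exact h (j :: v) (j :: w) (isInternalAt_cons.2 ⟨c, hc, hv⟩) (isInternalAt_cons.2 ⟨c, hc, hw⟩)
        (List.cons_prefix_cons.2 ⟨rfl, hvw⟩) (List.cons_injective.ne hne)
  · rintro ⟨hroot, hbranch⟩ v (_ | ⟨j, q⟩) hv hw hvw hne
    · exact absurd (List.prefix_nil.1 hvw) hne
    obtain _ | ⟨i, p⟩ := v
    · exact hroot j q hw
    obtain ⟨rfl, hpq⟩ := List.cons_prefix_cons.1 hvw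
    obtain ⟨c, hc, hp⟩ := isInternalAt_cons.1 hv
    obtain ⟨d, hd, hq⟩ := isInternalAt_cons.1 hw
    obtain rfl : c = d := by simpa [hc] using hd
    exact hbranch i c hc p q hp hq hpq fun h => hne (congrArg _ h)

lemma IsStrictLabelling.monotone [Preorder α] {F : List ℕ → α} (hF : IsStrictLabelling t F)
    (hu : IsInternalAt t u) (hv : IsInternalAt t v) (huv : u <+: v) : F u ≤ F v := by
  obtain rfl | hne := eq_or_ne u v
  · exact le_rfl
  · exact (hF u v hu hv huv hne).le

lemma isStrictLabelling_length (t : PTree) : IsStrictLabelling t List.length :=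
  fun _ _ _ _ hvw hne => hvw.length_le.lt_of_ne fun h => hne (hvw.eq_of_length h)

lemma IsStrictLabelling.owner_eq_iff [PartialOrder α] {F : List ℕ → α}
    (hF : IsStrictLabelling t F) (hij : i ≤ j) (hi : (owners t)[i]? = some u)
    (hj : (owners t)[j]? = some v) : u = v ↔
      F u = F v ∧ ∀ l x, i ≤ l → l ≤ j → (owners t)[l]? = some x → F u ≤ F x := by
  have internal {l : ℕ} {x : List ℕ} (hl : (owners t)[l]? = some x) : IsInternalAt t x :=
    isInternalAt_of_mem_owners (List.mem_of_getElem? hl)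
  constructor
  · rintro rfl
    exact ⟨rfl, fun l x hil hlj hl =>
      hF.monotone (internal hi) (internal hl) (prefix_owner_between hil hlj hi hj hl)⟩
  · rintro ⟨heq, hle⟩
    obtain ⟨l, x, hil, hlj, hl, hxu, hxv⟩ := exists_common_prefix_owner_between hij hi hj
    have eq_of_prefix {y : List ℕ} (hy : IsInternalAt t y) (hxy : x <+: y) (hFy : F y = F u) :
        x = y := by
      by_contra hne
      exact ((hF x y (internal hl) hy hxy hne).trans_eq hFy).not_ge (hle l x hil hlj hl)
    exact (eq_of_prefix (internal hi) hxu rfl).symm.trans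
      (eq_of_prefix (internal hj) hxv heq.symm)

lemma IsSchroder.two_le_length (h : IsSchroder (.node cs)) (hcs : cs ≠ []) : 2 ≤ cs.length := by
  cases h with
  | leaf => exact absurd rfl hcs
  | node _ hlen _ => exact hlen

lemma IsSchroder.of_mem (h : IsSchroder (.node cs)) (hc : c ∈ cs) : IsSchroder c := by
  cases h with
  | leaf => exact absurd hc List.not_mem_nil
  | node _ _ hmem => exact hmem c hc

lemma mem_owners_cons : j :: p ∈ owners (node cs) ↔ ∃ c, cs[j]? = some c ∧ p ∈ owners c := by
  simp only [List.mem_iff_getElem?, getElem?_owners_cons]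
  constructor
  · rintro ⟨_, c, i, hc, hi, -⟩
    exact ⟨c, hc, i, hi⟩
  · rintro ⟨c, hc, i, hi⟩
    exact ⟨_, c, i, hc, hi, rfl⟩

/-- A vertex with a single child would own no sector. -/
lemma IsSchroder.mem_owners_iff (ht : IsSchroder t) : v ∈ owners t ↔ IsInternalAt t v := by
  refine ⟨isInternalAt_of_mem_owners, fun hv => ?_⟩
  induction v generalizing t with
  | nil =>
    obtain ⟨cs⟩ := t
    have hlen := ht.two_le_length (isInternalAt_nil.1 hv)
    rw [owners_node]
    exact mem_intercalate_singleton_self (by rwa [branchOwners, List.length_mapIdx])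
  | cons j p ih =>
    obtain ⟨cs⟩ := t
    obtain ⟨c, hc, hp⟩ := isInternalAt_cons.1 hv
    exact mem_owners_cons.2 ⟨c, hc, ih (ht.of_mem (List.mem_of_getElem? hc)) hp⟩

lemma map_owners_node (cs : List PTree) (F : List ℕ → α) :
    (owners (node cs)).map F = [F []].intercalate ((branchOwners cs).map (List.map F)) := by
  rw [owners_node, map_intercalate_singleton]

lemma getElem?_map_branchOwners (cs : List PTree) (F : List ℕ → α) (j : ℕ) :
    ((branchOwners cs).map (List.map F))[j]? =
      cs[j]?.map fun c => (owners c).map (F ∘ List.cons j) := by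
  simp only [branchOwners, List.getElem?_map, List.getElem?_mapIdx, Option.map_map,
    Function.comp_def, List.map_map]

lemma IsStrictLabelling.notMem_map_of_mem_branchOwners [Preorder α] {F : List ℕ → α}
    (hF : IsStrictLabelling (node cs) F) {l : List (List ℕ)} (hl : l ∈ branchOwners cs) :
    F [] ∉ l.map F := by
  obtain ⟨j, c, hc, rfl⟩ := mem_branchOwners.1 hl
  rw [List.map_map]
  intro hroot
  obtain ⟨p, hp, heq⟩ := List.mem_map.1 hroot
  have hjp : j :: p ∈ owners (node cs) := mem_owners_cons.2 ⟨c, hc, hp⟩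
  exact ((isStrictLabelling_node_iff.1 hF).1 j p (isInternalAt_of_mem_owners hjp)).ne' heq

lemma IsStrictLabelling.splitOn_map_owners [Preorder α] [DecidableEq α] {F : List ℕ → α}
    (hcs : cs ≠ []) (hF : IsStrictLabelling (node cs) F) :
    ((owners (node cs)).map F).splitOn (F []) = (branchOwners cs).map (List.map F) := by
  rw [map_owners_node, List.splitOn_intercalate _
    (List.forall_mem_map.2 fun _ => hF.notMem_map_of_mem_branchOwners)]
  simpa [branchOwners] using hcs

lemma IsSchroder.root_mem_map_owners (ht : IsSchroder (.node cs)) (hcs : cs ≠ []) (F : List ℕ → α) :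
    F [] ∈ (owners (PTree.node cs)).map F :=
  List.mem_map_of_mem (ht.mem_owners_iff.2 (isInternalAt_nil.2 hcs))

lemma IsSchroder.map_owners_eq_nil_iff (ht : IsSchroder (.node cs)) (F : List ℕ → α) :
    (owners (PTree.node cs)).map F = [] ↔ cs = [] := by
  constructor
  · intro h
    by_contra hcs
    simpa only [h, List.not_mem_nil] using ht.root_mem_map_owners hcs F
  · rintro rfl
    rw [owners_node]
    rfl

lemma IsStrictLabelling.root_le_of_mem [Preorder α] {F : List ℕ → α} {x : α}
    (hF : IsStrictLabelling t F) (hx : x ∈ (owners t).map F) : F [] ≤ x := by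
  obtain ⟨v, hv, rfl⟩ := List.mem_map.1 hx
  obtain _ | ⟨j, p⟩ := v
  · exact le_rfl
  · obtain ⟨cs⟩ := t
    exact ((isStrictLabelling_node_iff.1 hF).1 j p (isInternalAt_of_mem_owners hv)).le

lemma eq_of_map_owners_eq [PartialOrder α] {t t' : PTree} (ht : IsSchroder t)
    (ht' : IsSchroder t') {F F' : List ℕ → α} (hF : IsStrictLabelling t F)
    (hF' : IsStrictLabelling t' F') (h : (owners t).map F = (owners t').map F') : t = t' := by
  classical
  induction t using induction_on generalizing t' F F' with
  | node cs ih =>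
    obtain ⟨cs'⟩ := t'
    have nil_iff : cs = [] ↔ cs' = [] := by
      rw [← ht.map_owners_eq_nil_iff F, h, ht'.map_owners_eq_nil_iff]
    obtain rfl | hcs := eq_or_ne cs []
    · rw [nil_iff.1 rfl]
    have hcs' : cs' ≠ [] := mt nil_iff.2 hcs
    have root_eq : F [] = F' [] :=
      le_antisymm (hF.root_le_of_mem (h ▸ ht'.root_mem_map_owners hcs' F'))
        (hF'.root_le_of_mem (h ▸ ht.root_mem_map_owners hcs F))
    have branch_eq : (branchOwners cs).map (List.map F) = (branchOwners cs').map (List.map F') := by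
      rw [← hF.splitOn_map_owners hcs, ← hF'.splitOn_map_owners hcs', h, root_eq]
    have hlen : cs.length = cs'.length := by
      simpa [branchOwners] using congrArg List.length branch_eq
    congr 1
    refine List.ext_getElem hlen fun j hj hj' => ?_
    have hc : cs[j]? = some cs[j] := List.getElem?_eq_getElem hj
    have hc' : cs'[j]? = some cs'[j] := List.getElem?_eq_getElem hj'
    refine ih cs[j] (List.getElem_mem hj) (ht.of_mem (List.getElem_mem hj))
      (ht'.of_mem (List.getElem_mem hj')) ((isStrictLabelling_node_iff.1 hF).2 j _ hc)
      ((isStrictLabelling_node_iff.1 hF').2 j _ hc') ?_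
    have := congrArg (fun L => L[j]?) branch_eq
    simpa only [getElem?_map_branchOwners, hc, hc', Option.map_some, Option.some_inj] using this

lemma exists_map_owners_eq_intercalate [Preorder α] {m : α} {Ls : List (List α)}
    (hLs : 2 ≤ Ls.length) (m_lt : ∀ l ∈ Ls, ∀ x ∈ l, m < x)
    (exists_tree : ∀ l ∈ Ls, ∃ t F, IsSchroder t ∧ IsStrictLabelling t F ∧ (owners t).map F = l) :
    ∃ t F, IsSchroder t ∧ IsStrictLabelling t F ∧ (owners t).map F = [m].intercalate Ls := by
  have : Nonempty PTree := ⟨leaf⟩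
  have : Nonempty α := ⟨m⟩
  choose! s F schroder strict word using exists_tree
  let G : List ℕ → α
    | [] => m
    | j :: p => F (Ls.getD j []) p
  have G_comp {j : ℕ} {l : List α} (hl : Ls[j]? = some l) : G ∘ List.cons j = F l := by
    funext p
    simp [G, hl]
  refine ⟨node (Ls.map s), G, .node _ (by simpa using hLs) ?_,
    isStrictLabelling_node_iff.2 ⟨fun j p hp => ?_, fun j c hc => ?_⟩, ?_⟩
  · exact List.forall_mem_map.2 schroder
  · obtain ⟨c, hc, hp⟩ := isInternalAt_cons.1 hp
    rw [List.getElem?_map] at hc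
    obtain ⟨l, hl, rfl⟩ := Option.map_eq_some_iff.1 hc
    have l_mem := List.mem_of_getElem? hl
    refine m_lt l l_mem _ ?_
    rw [← word l l_mem, ← G_comp hl]
    exact List.mem_map_of_mem (f := G ∘ List.cons j) ((schroder l l_mem).mem_owners_iff.2 hp)
  · rw [List.getElem?_map] at hc
    obtain ⟨l, hl, rfl⟩ := Option.map_eq_some_iff.1 hc
    exact G_comp hl ▸ strict l (List.mem_of_getElem? hl)
  · rw [map_owners_node]
    congr 1
    refine List.ext_getElem? fun j => ?_
    rw [getElem?_map_branchOwners, List.getElem?_map]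
    cases hl : Ls[j]? with
    | none => rfl
    | some l => rw [G_comp hl, Option.map_some, Option.map_some, word l (List.mem_of_getElem? hl)]

lemma exists_map_owners_eq [LinearOrder α] [Nonempty α] (L : List α) :
    ∃ t F, IsSchroder t ∧ IsStrictLabelling t F ∧ (owners t).map F = L := by
  induction hN : L.length using Nat.strong_induction_on generalizing L with
  | _ N ih =>
    subst hN
    obtain rfl | hL := eq_or_ne L []
    · refine ⟨leaf, fun _ => Classical.arbitrary α, .leaf,
        isStrictLabelling_node_iff.2 ⟨fun j p hp => ?_, fun j c hc => ?_⟩,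
        (IsSchroder.leaf.map_owners_eq_nil_iff _).2 rfl⟩
      · simp [isInternalAt_cons] at hp
      · simp at hc
    obtain ⟨m, m_mem, m_le⟩ : ∃ m ∈ L, ∀ x ∈ L, m ≤ x := by
      simpa using L.toFinset.exists_min_image id (by simpa using hL)
    obtain ⟨Ls, Ls_ne, m_notMem, rfl⟩ := exists_intercalate_singleton_eq m L
    have two_le_length : 2 ≤ Ls.length := by
      match Ls with
      | [] => exact absurd rfl Ls_ne
      | [l] =>
        rw [List.intercalate_singleton] at m_mem
        exact absurd m_mem (m_notMem l (List.mem_singleton_self l))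
      | _ :: _ :: _ => simp
    refine exists_map_owners_eq_intercalate two_le_length (fun l hl x hx => ?_) fun l hl =>
      ih l.length (length_lt_length_intercalate_singleton two_le_length hl (m_notMem l hl)) l rfl
    exact (m_le x ((sublist_intercalate_singleton m hl).subset hx)).lt_of_ne
      fun h => m_notMem l hl (h ▸ hx)

end PTree

end StrictLabellings

section TreeWords

namespace PTree

variable {n : ℕ} {t : PTree}

lemma IsSchroder.length_lt_of_mem_owners (ht : IsSchroder t) {v : List ℕ} (hv : v ∈ owners t) :
    v.length < (owners t).length := by
  induction t using induction_on generalizing v with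
  | node cs ih =>
    obtain _ | ⟨j, p⟩ := v
    · exact List.length_pos_of_mem hv
    obtain ⟨c, hc, hp⟩ := mem_owners_cons.1 hv
    have c_mem := List.mem_of_getElem? hc
    have branch_mem : (owners c).map (List.cons j) ∈ branchOwners cs :=
      mem_branchOwners.2 ⟨j, c, hc, rfl⟩
    have two_le : 2 ≤ (branchOwners cs).length := by
      rw [branchOwners, List.length_mapIdx]
      exact ht.two_le_length (List.ne_nil_of_mem c_mem)
    have branch_length_lt :=
      length_lt_length_intercalate_singleton two_le branch_mem (x := []) (by simp)
    rw [← owners_node, List.length_map] at branch_length_lt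
    exact (Nat.succ_le_of_lt (ih c c_mem (ht.of_mem c_mem) hp)).trans_lt branch_length_lt

lemma mem_ST_iff : t ∈ ST n ↔ IsSchroder t ∧ (owners t).length = n := by
  rw [ST, Set.mem_ofPred_eq, ← length_owners_add_one, Nat.add_right_cancel_iff]

/-- A Schröder tree is determined by the depths of the owners of its sectors. -/
lemma finite_ST (n : ℕ) : (ST n).Finite := by
  refine Set.Finite.of_finite_image (f := fun t => (owners t).map List.length)
    ((Set.finite_range fun w : Fin n → Fin n => List.ofFn fun i => (w i : ℕ)).subset ?_) ?_
  · rintro _ ⟨t, ht, rfl⟩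
    obtain ⟨hs, rfl⟩ := mem_ST_iff.1 ht
    refine ⟨fun i => ⟨(owners t)[i].length, hs.length_lt_of_mem_owners (List.getElem_mem _)⟩, ?_⟩
    exact List.ext_getElem (by simp) (by simp)
  · intro t ht t' ht' h
    exact eq_of_map_owners_eq ht.1 ht'.1 (isStrictLabelling_length t)
      (isStrictLabelling_length t') h

/-- The internal vertex owning the sector `i`. -/
def ownerAt (ht : t ∈ ST n) (i : Fin n) : {v // IsInternalAt t v} :=
  ⟨(owners t)[i.val]'((mem_ST_iff.1 ht).2.symm ▸ i.2),
    isInternalAt_of_mem_owners (List.getElem_mem _)⟩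

lemma getElem?_owners (ht : t ∈ ST n) (i : Fin n) : (owners t)[i.val]? = some (ownerAt ht i).1 :=
  List.getElem?_eq_getElem _

lemma ownerAt_surjective (ht : t ∈ ST n) : Function.Surjective (ownerAt ht) := fun v => by
  obtain ⟨hs, hlen⟩ := mem_ST_iff.1 ht
  obtain ⟨i, hi, h⟩ := List.getElem_of_mem (hs.mem_owners_iff.2 v.2)
  exact ⟨⟨i, hlen ▸ hi⟩, Subtype.ext h⟩

lemma omegaSkK_eq_strictSurjCount (t : PTree) (k : ℕ) : omegaSkK t k =
    strictSurjCount (fun v w : {v // IsInternalAt t v} => v.1 <+: w.1 ∧ v ≠ w) k := by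
  simp only [omegaSkK, strictSurjCount, and_imp]

lemma omegaSk_eq_sum_Icc (ht : t ∈ ST n) :
    omegaSk t = ∑ k ∈ Finset.Icc 1 n, (-1 : ℂ) ^ (k + 1) / k * omegaSkK t k := by
  have : Finite {v // IsInternalAt t v} := Finite.of_surjective _ (ownerAt_surjective ht)
  have card_le : Nat.card {v // IsInternalAt t v} ≤ n := by
    simpa using Nat.card_le_card_of_surjective _ (ownerAt_surjective ht)
  have omegaSk_eq : omegaSk t =
      muruaCoeff fun v w : {v // IsInternalAt t v} => v.1 <+: w.1 ∧ v ≠ w := by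
    simp only [omegaSk, numInternal, omegaSkK_eq_strictSurjCount,
      cast_muruaCoeff_eq_sum_Icc _ le_rfl]
  rw [omegaSk_eq, cast_muruaCoeff_eq_sum_Icc _ card_le]
  simp_rw [omegaSkK_eq_strictSurjCount]

/-- The word `w` is read off the sectors of `t` for some strict labelling of the internal
vertices. -/
def IsLabelWord {α : Type*} [Preorder α] (t : PTree) (w : Fin n → α) : Prop :=
  ∃ F, IsStrictLabelling t F ∧ (owners t).map F = List.ofFn w

lemma isLabelWord_iff {α : Type*} [Preorder α] (ht : t ∈ ST n) {w : Fin n → α} :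
    IsLabelWord t w ↔ ∃ F, IsStrictLabelling t F ∧ ∀ i, F (ownerAt ht i).1 = w i := by
  refine exists_congr fun F => and_congr_right fun _ => ⟨fun h i => ?_, fun h => ?_⟩
  · simpa [getElem?_owners ht i] using congrArg (fun L => L[i.val]?) h
  · refine List.ext_getElem (by simpa using (mem_ST_iff.1 ht).2) fun i _ hi => ?_
    simpa [ownerAt] using h ⟨i, by simpa using hi⟩

lemma isLabelWord_iff_exists_strict {α : Type*} [Preorder α] [Nonempty α] (ht : t ∈ ST n)
    {w : Fin n → α} : IsLabelWord t w ↔ ∃ f : {v // IsInternalAt t v} → α,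
      (∀ v w, v.1 <+: w.1 → v ≠ w → f v < f w) ∧ f ∘ ownerAt ht = w := by
  rw [isLabelWord_iff ht]
  constructor
  · rintro ⟨F, hF, hw⟩
    exact ⟨fun v => F v.1, fun v w hvw hne => hF v w v.2 w.2 hvw (Subtype.coe_ne_coe.2 hne),
      funext hw⟩
  · rintro ⟨f, hf, rfl⟩
    have extend_apply (v : {v // IsInternalAt t v}) :
        Function.extend Subtype.val f (fun _ => Classical.arbitrary α) v.1 = f v :=
      Subtype.val_injective.extend_apply f _ v
    refine ⟨_, fun v w hv hw hvw hne => ?_, fun i => extend_apply _⟩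
    rw [extend_apply ⟨v, hv⟩, extend_apply ⟨w, hw⟩]
    exact hf _ _ hvw (Subtype.coe_ne_coe.1 hne)

lemma omegaSkK_eq_card_words (ht : t ∈ ST n) (k : ℕ) [NeZero k] : omegaSkK t k =
    Nat.card {w : Fin n → Fin k // Function.Surjective w ∧ IsLabelWord t w} := by
  rw [omegaSkK, card_surjective_eq_card_comp (ownerAt_surjective ht)]
  simp_rw [isLabelWord_iff_exists_strict ht]

lemma IsLabelWord.sameOwner_iff {α : Type*} [PartialOrder α] (ht : t ∈ ST n) {w : Fin n → α}
    (h : IsLabelWord t w) (i j : Fin n) :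
    SameOwner t i j ↔ (levelPart w).part i = (levelPart w).part j := by
  wlog hij : i ≤ j generalizing i j
  · rw [eq_comm, ← this j i (le_of_not_ge hij)]
    exact exists_congr fun _ => and_comm
  obtain ⟨F, hF, hw⟩ := (isLabelWord_iff ht).1 h
  have sameOwner_iff_eq : SameOwner t i j ↔ (ownerAt ht i).1 = (ownerAt ht j).1 := by
    simp only [SameOwner, ownsSector_iff, getElem?_owners ht, Option.some_inj]
    exact ⟨fun ⟨v, hi, hj⟩ => hi.trans hj.symm, fun heq => ⟨_, heq, rfl⟩⟩
  rw [sameOwner_iff_eq, hF.owner_eq_iff hij (getElem?_owners ht i) (getElem?_owners ht j),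
    part_levelPart_eq_iff_of_le hij, hw, hw]
  refine and_congr_right fun _ => ⟨fun hle l hil hlj => ?_, fun hle l x hil hlj hx => ?_⟩
  · exact hw l ▸ hle l _ hil hlj (getElem?_owners ht l)
  · lift l to Fin n using hlj.trans_lt j.2
    obtain rfl : (ownerAt ht l).1 = x := by simpa [getElem?_owners ht] using hx
    exact (hle l hil hlj).trans_eq (hw l).symm

lemma IsLabelWord.treePartEq_iff {α : Type*} [PartialOrder α] (ht : t ∈ ST n) {w : Fin n → α}
    (h : IsLabelWord t w) {π : NPart n} : TreePartEq t π ↔ levelPart w = π := by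
  rw [le_antisymm_iff, le_iff_part_eq_part, le_iff_part_eq_part]
  simp only [← forall_and, ← iff_iff_implies_and_implies]
  exact forall₂_congr fun i j => by rw [h.sameOwner_iff ht, ← part_eq_part_iff_exists]

lemma existsUnique_isLabelWord {α : Type*} [LinearOrder α] [Nonempty α] (w : Fin n → α) :
    ∃! t, t ∈ ST n ∧ IsLabelWord t w := by
  obtain ⟨t, F, ht, hF, hw⟩ := exists_map_owners_eq (List.ofFn w)
  have length_eq : (owners t).length = n := by simpa using congrArg List.length hw
  refine ⟨t, ⟨mem_ST_iff.2 ⟨ht, length_eq⟩, F, hF, hw⟩, ?_⟩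
  rintro t' ⟨ht', F', hF', hw'⟩
  exact eq_of_map_owners_eq ht'.1 ht hF' hF (hw'.trans hw.symm)

open Classical in
lemma sum_omegaSkK (π : NPart n) (k : ℕ) [NeZero k] :
    ∑ t ∈ (finite_ST n).toFinset with TreePartEq t π, omegaSkK t k = (levelWords π k).ncard := by
  choose T hT T_unique using fun w : Fin n → Fin k => existsUnique_isLabelWord w
  have maps_to : ∀ w ∈ (levelWords π k).toFinset,
      T w ∈ {t ∈ (finite_ST n).toFinset | TreePartEq t π} := fun w hw => by
    obtain ⟨hST, hword⟩ := hT w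
    exact Finset.mem_filter.2 ⟨(finite_ST n).mem_toFinset.2 hST,
      (hword.treePartEq_iff hST).2 (Set.mem_toFinset.1 hw).2⟩
  rw [Set.ncard_eq_toFinset_card', Finset.card_eq_sum_card_fiberwise maps_to]
  refine Finset.sum_congr rfl fun t ht => ?_
  obtain ⟨hST, hπ⟩ := Finset.mem_filter.1 ht
  replace hST := (finite_ST n).mem_toFinset.1 hST
  rw [omegaSkK_eq_card_words hST, Nat.card_eq_fintype_card, Fintype.card_subtype]
  congr 1
  ext w
  rw [Finset.mem_filter_univ, Finset.mem_filter, Set.mem_toFinset]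
  constructor
  · rintro ⟨hw, hword⟩
    exact ⟨⟨hw, (hword.treePartEq_iff hST).1 hπ⟩, (T_unique w t ⟨hST, hword⟩).symm⟩
  · rintro ⟨hw, rfl⟩
    exact ⟨hw.1, (hT w).2⟩

lemma finsum_tree_eq_sum_levelWords (π : NPart n) :
    ∑ᶠ t ∈ {t ∈ ST n | TreePartEq t π}, omegaSk t =
      ∑ k ∈ Finset.Icc 1 n, (-1 : ℂ) ^ (k + 1) / k * (levelWords π k).ncard := by
  classical
  calc
    _ = ∑ t ∈ (finite_ST n).toFinset with TreePartEq t π, omegaSk t := by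
      rw [← finsum_mem_coe_finset, Finset.coe_filter]
      simp only [Set.Finite.mem_toFinset]
    _ = ∑ t ∈ (finite_ST n).toFinset with TreePartEq t π,
        ∑ k ∈ Finset.Icc 1 n, (-1 : ℂ) ^ (k + 1) / k * omegaSkK t k :=
      Finset.sum_congr rfl fun t ht =>
        omegaSk_eq_sum_Icc ((finite_ST n).mem_toFinset.1 (Finset.mem_filter.1 ht).1)
    _ = _ := by
      rw [Finset.sum_comm]
      refine Finset.sum_congr rfl fun k hk => ?_
      have : NeZero k := ⟨Nat.one_le_iff_ne_zero.1 (Finset.mem_Icc.1 hk).1⟩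
      rw [← Finset.mul_sum, ← sum_omegaSkK, Nat.cast_sum]

end PTree

end TreeWords

theorem alpha_eq_alternating_sum_irreducible_general (n : ℕ) (π : NPart n) :
    (∑ᶠ t ∈ {t ∈ PTree.ST n | TreePartEq t π}, PTree.omegaSk t) =
      ∑ᶠ σ ∈ {σ : NPart n | IsNoncrossing σ ∧ IsIrreducibleNC σ ∧ SqSubseteq π σ},
        (-1 : ℂ) ^ (π.parts.card - σ.parts.card) * omegaNest σ :=
  (PTree.finsum_tree_eq_sum_levelWords π).trans (finsum_irreducible_eq_sum_levelWords π).symm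

/-- For every `n ≥ 1` and every noncrossing partition `π ∈ NC(n)`:
`Σ_{t ∈ ST(n), π(t) = π} ω(sk(t)) = Σ_{σ ∈ NC_irr(n), π ⊑ σ} (−1)^{|π|−|σ|} ω(t(σ))`. -/
theorem alpha_eq_alternating_sum_irreducible
    (n : ℕ) (hn : 1 ≤ n) (π : NPart n) (hπ : IsNoncrossing π) :
    (∑ᶠ t ∈ {t ∈ PTree.ST n | TreePartEq t π}, PTree.omegaSk t) =
      ∑ᶠ σ ∈ {σ : NPart n | IsNoncrossing σ ∧ IsIrreducibleNC σ ∧ SqSubseteq π σ},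
        (-1 : ℂ) ^ (π.parts.card - σ.parts.card) * omegaNest σ :=
  alpha_eq_alternating_sum_irreducible_general n π
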